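/- For every N > 0 there exist ρ = ρ(N) > 0 and c₀ = c₀(N) > 0 such that the following holds. Let B be the unit ball in ℝⁿ, B₊ = {y ∈ ℝⁿ : |y'|² + |y''|² < 1, y'' > 0} the upper half ball, and Γ₀ = B̄₊ ∩ {y'' = 0} its flat face. Let g ∈ C(B̄₊) be harmonic in B₊ and C¹ up to Γ₀, with ∂g/∂y'' = 0 on Γ₀, normalized so that sup_{(1/4)B₊} |g| = 1. If the doubling index satisfies N_g(0,1/4) ≤ N, then there exists x ∈ Γ₀ ∩ (1/8)B such that |g(y)| ≥ c₀ for every y ∈ B(x,ρ) ∩ B₊. -/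

import Mathlib

noncomputable section

open MeasureTheory Metric Set Filter Asymptotics
open scoped Topology NNReal ENNReal RealInnerProductSpace

namespace NodalNeumann

/-- Euclidean space `ℝⁿ`. -/
abbrev Euc (n : ℕ) : Type := EuclideanSpace ℝ (Fin n)

/-- The first `n` coordinates `y'` of a point `y = (y', y'') ∈ ℝ^{n+1}`. -/
def front {n : ℕ} (y : Euc (n + 1)) : Euc n :=
  (EuclideanSpace.equiv (Fin n) ℝ).symm fun i => y i.castSucc

/-- The last coordinate `y''` of a point `y = (y', y'') ∈ ℝ^{n+1}`. -/
def lastc {n : ℕ} (y : Euc (n + 1)) : ℝ := y (Fin.last n)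

/-- `(v, a) ∈ ℝ^{n+1}` built from `v ∈ ℝⁿ` and `a ∈ ℝ`. -/
def snocVec {n : ℕ} (v : Euc n) (a : ℝ) : Euc (n + 1) :=
  (EuclideanSpace.equiv (Fin (n + 1)) ℝ).symm
    fun i => if h : i = Fin.last n then a else v (i.castPred h)

/-- The Laplacian of `u : ℝⁿ → ℝ`. -/
def laplacian {n : ℕ} (u : Euc n → ℝ) (x : Euc n) : ℝ :=
  ∑ i : Fin n, fderiv ℝ (fun y => fderiv ℝ u y (EuclideanSpace.single i 1)) x
    (EuclideanSpace.single i 1)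

/-- `u` is harmonic on `s`. -/
def HarmonicOn {n : ℕ} (u : Euc n → ℝ) (s : Set (Euc n)) : Prop :=
  ContDiffOn ℝ 2 u s ∧ ∀ x ∈ s, laplacian u x = 0

/-- `ν` is the outward unit normal vector of `Ω` at the boundary point `x`:
it is a unit vector, points out of `Ω`, `-ν` points into `Ω`, and it is
orthogonal to the boundary at `x` (in the little-o sense). -/
def OutwardNormalAt {n : ℕ} (Ω : Set (Euc n)) (x ν : Euc n) : Prop :=
  ‖ν‖ = 1 ∧
  (∀ᶠ t : ℝ in 𝓝[>] (0 : ℝ), x + t • ν ∉ closure Ω) ∧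
  (∀ᶠ t : ℝ in 𝓝[>] (0 : ℝ), x - t • ν ∈ Ω) ∧
  (fun y : Euc n => (⟪ν, y - x⟫)) =o[𝓝[frontier Ω] x] fun y => ‖y - x‖

/-- `ν` is an outward unit normal field of `Ω` along `∂Ω ∩ s`. -/
def OutwardNormalFieldOn {n : ℕ} (Ω : Set (Euc n)) (ν : Euc n → Euc n)
    (s : Set (Euc n)) : Prop :=
  ∀ x ∈ frontier Ω ∩ s, OutwardNormalAt Ω x (ν x)

/-- The homogeneous Neumann boundary condition `∂h/∂ν = 0` on `∂Ω ∩ s`. -/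
def NeumannBC {n : ℕ} (Ω : Set (Euc n)) (ν : Euc n → Euc n) (h : Euc n → ℝ)
    (s : Set (Euc n)) : Prop :=
  ∀ x ∈ frontier Ω ∩ s, DifferentiableWithinAt ℝ h (closure Ω) x ∧
    fderivWithin ℝ h (closure Ω) x (ν x) = 0

/-- `f : ℝⁿ → ℝ` is `C^{1,1}` with character `M`: differentiable with `M`-Lipschitz
derivative (and itself `M`-Lipschitz). -/
def IsC11FunWith {n : ℕ} (M : ℝ≥0) (f : Euc n → ℝ) : Prop :=
  Differentiable ℝ f ∧ LipschitzWith M f ∧ LipschitzWith M fun x => fderiv ℝ f x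

/-- `Ω ∩ B(x,r)` is, after an isometry `T` of `ℝ^{n+1}` with `T 0 = x`, the region
in the ball above the graph of a function `f` with `f 0 = 0` satisfying `P`. -/
def IsGraphBall {n : ℕ} (Ω : Set (Euc (n + 1))) (x : Euc (n + 1)) (r : ℝ)
    (P : (Euc n → ℝ) → Prop) : Prop :=
  ∃ (T : Euc (n + 1) ≃ᵃⁱ[ℝ] Euc (n + 1)) (f : Euc n → ℝ), P f ∧ T 0 = x ∧ f 0 = 0 ∧
    Ω ∩ ball x r =
      ⇑T '' {y : Euc (n + 1) | y ∈ ball (0 : Euc (n + 1)) r ∧ f (front y) < lastc y}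

/-- `∂Ω ∩ B(x,r) ∈ Lip(τ)`. -/
def LipGraphBall {n : ℕ} (Ω : Set (Euc (n + 1))) (x : Euc (n + 1)) (r τ : ℝ) : Prop :=
  IsGraphBall Ω x r fun f => LipschitzWith (Real.toNNReal τ) f

/-- `Ω` is a `C^{1,1}` domain with character `(ρ, M)`. -/
def IsC11DomainWith {n : ℕ} (Ω : Set (Euc (n + 1))) (ρ : ℝ) (M : ℝ≥0) : Prop :=
  IsOpen Ω ∧ IsConnected Ω ∧ 0 < ρ ∧
    ∀ x ∈ frontier Ω, IsGraphBall Ω x ρ (IsC11FunWith M)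

/-- `Ω` is a `C^{1,1}` domain. -/
def IsC11Domain {n : ℕ} (Ω : Set (Euc (n + 1))) : Prop :=
  ∃ (ρ : ℝ) (M : ℝ≥0), IsC11DomainWith Ω ρ M

/-- `Ω` is a Lipschitz domain with character `(ρ, M)`. -/
def IsLipDomainWith {n : ℕ} (Ω : Set (Euc (n + 1))) (ρ : ℝ) (M : ℝ≥0) : Prop :=
  IsOpen Ω ∧ IsConnected Ω ∧ 0 < ρ ∧
    ∀ x ∈ frontier Ω, IsGraphBall Ω x ρ fun f => LipschitzWith M f

/-- The portion `∂Ω ∩ s` of the boundary has `C^{1,1}` character `(ρ, M)`. -/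
def HasC11CharacterOn {n : ℕ} (Ω : Set (Euc (n + 1))) (s : Set (Euc (n + 1)))
    (ρ : ℝ) (M : ℝ≥0) : Prop :=
  0 < ρ ∧ ∀ x ∈ frontier Ω ∩ s, IsGraphBall Ω x ρ (IsC11FunWith M)

/-- `H_h(x,r) = ∫_{B(x,r) ∩ Ω} h²`. -/
def Hfun {n : ℕ} (Ω : Set (Euc n)) (h : Euc n → ℝ) (x : Euc n) (r : ℝ) : ℝ :=
  ∫ y in ball x r ∩ Ω, h y ^ 2

/-- The doubling index `N_h(x,r) = log (H_h(x,2r) / H_h(x,r))`. -/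
def Nfun {n : ℕ} (Ω : Set (Euc n)) (h : Euc n → ℝ) (x : Euc n) (r : ℝ) : ℝ :=
  Real.log (Hfun Ω h x (2 * r) / Hfun Ω h x r)

/-- Closed axis-parallel cube with centre `c` and side length `s`. -/
def cube {n : ℕ} (c : Euc n) (s : ℝ) : Set (Euc n) :=
  {y : Euc n | ∀ i, |y i - c i| ≤ s / 2}

/-- Maximal doubling index `N*_h(Q)` over the cube of centre `c` and side `s`
(whose diameter is `√n · s`). -/
def Nstar {n : ℕ} (Ω : Set (Euc n)) (h : Euc n → ℝ) (c : Euc n) (s : ℝ) : ℝ :=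
  sSup {N : ℝ | ∃ x ∈ cube c s ∩ closure Ω, ∃ r : ℝ,
    0 < r ∧ r ≤ Real.sqrt n * s ∧ N = Nfun Ω h x r}

/-- The nodal set `Z(h) = {x ∈ Ω : h x = 0}`. -/
def zeroSet {n : ℕ} (Ω : Set (Euc n)) (h : Euc n → ℝ) : Set (Euc n) :=
  {x ∈ Ω | h x = 0}

/-- `sup_s g`. -/
def supOn {α : Type*} (g : α → ℝ) (s : Set α) : ℝ := sSup (g '' s)

/-- The open cylinder `S(x,r,t)` of radius `r` and height `t` whose lower face is
centred at `x`. -/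
def cyl {n : ℕ} (x : Euc (n + 1)) (r t : ℝ) : Set (Euc (n + 1)) :=
  {y : Euc (n + 1) | ‖front y - front x‖ < r ∧ 0 < lastc y - lastc x ∧
    lastc y - lastc x < t}

/-- In the chosen coordinates (centred at `x`, with `e_n = -ν(x)`), `Ω ∩ B(x,R)`
is the region above the graph of the `τ`-Lipschitz function `f` with `f 0 = 0`. -/
def AlignedLipGraphOn {n : ℕ} (Ω : Set (Euc (n + 1))) (x : Euc (n + 1)) (R τ : ℝ)
    (f : Euc n → ℝ) : Prop :=
  LipschitzWith (Real.toNNReal τ) f ∧ f 0 = 0 ∧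
    Ω ∩ ball x R = {y ∈ ball x R | f (front (y - x)) < lastc (y - x)}

/-- `z` is the centre of one of the boundary cubes `q ∈ 𝓑_k(Q)` of the standard
construction for the cube `Q` of centre `xQ` and side `s`: the projection of `z` is
the centre of one of the `2^{k·n}` subcubes of side `s/2^k` of the projection of
`Q`, and `z` lies on `∂Ω`. The cube `q` itself is `cube z (s/2^k)`. -/
def IsBdryCubeCenter {n : ℕ} (Ω : Set (Euc (n + 1))) (xQ : Euc (n + 1)) (s : ℝ)
    (k : ℕ) (z : Euc (n + 1)) : Prop :=
  z ∈ frontier Ω ∧ ∃ a : Fin n → ℕ, (∀ i, a i < 2 ^ k) ∧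
    ∀ i : Fin n, z i.castSucc = xQ i.castSucc - s / 2 + ((a i : ℝ) + 1 / 2) * (s / 2 ^ k)

/-- The infinite cylinder `Ω₀ × ℝ ⊂ ℝ^{n+1}` over `Ω₀ ⊂ ℝⁿ`. -/
def prodDomain {n : ℕ} (Ω₀ : Set (Euc n)) : Set (Euc (n + 1)) :=
  {y : Euc (n + 1) | front y ∈ Ω₀}

/-- The harmonic extension `h(x,t) = e^{√λ t} u(x)` of `u` to `Ω₀ × ℝ`. -/
def hExt {n : ℕ} (lam : ℝ) (u : Euc n → ℝ) : Euc (n + 1) → ℝ :=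
  fun y => Real.exp (Real.sqrt lam * lastc y) * u (front y)


/-- The open upper unit half-ball `B₊ ⊂ ℝ^{n+1}`. -/
def unitHalfBall (n : ℕ) : Set (Euc (n + 1)) :=
  {y : Euc (n + 1) | ‖y‖ < 1 ∧ 0 < lastc y}

/-- The flat face `Γ₀ = B̄₊ ∩ {y'' = 0}` of the upper half-ball. -/
def flatFace (n : ℕ) : Set (Euc (n + 1)) :=
  {y : Euc (n + 1) | ‖y‖ ≤ 1 ∧ lastc y = 0}


/-! ### Polynomial functions on Euclidean space -/

/-- The polynomial function attached to a multivariate polynomial. -/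
def ev {d : ℕ} (p : MvPolynomial (Fin d) ℝ) (x : Euc d) : ℝ :=
  MvPolynomial.eval (fun i => x i) p

/-- The algebraic Laplacian. -/
def lap {d : ℕ} (p : MvPolynomial (Fin d) ℝ) : MvPolynomial (Fin d) ℝ :=
  ∑ i, MvPolynomial.pderiv i (MvPolynomial.pderiv i p)

section Basics
variable {d : ℕ}

@[simp] lemma ev_add (p q : MvPolynomial (Fin d) ℝ) (x : Euc d) : ev (p + q) x = ev p x + ev q x := by
  simp [ev]
@[simp] lemma ev_sub (p q : MvPolynomial (Fin d) ℝ) (x : Euc d) : ev (p - q) x = ev p x - ev q x := by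
  simp [ev]
@[simp] lemma ev_mul (p q : MvPolynomial (Fin d) ℝ) (x : Euc d) : ev (p * q) x = ev p x * ev q x := by
  simp [ev]
@[simp] lemma ev_pow (p : MvPolynomial (Fin d) ℝ) (k : ℕ) (x : Euc d) : ev (p ^ k) x = ev p x ^ k := by
  simp [ev]
@[simp] lemma ev_neg (p : MvPolynomial (Fin d) ℝ) (x : Euc d) : ev (-p) x = - ev p x := by
  simp [ev]
@[simp] lemma ev_smul (a : ℝ) (p : MvPolynomial (Fin d) ℝ) (x : Euc d) :
    ev (a • p) x = a * ev p x := by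
  simp [ev]
@[simp] lemma ev_C (a : ℝ) (x : Euc d) : ev (MvPolynomial.C a) x = a := by simp [ev]
@[simp] lemma ev_one (x : Euc d) : ev (1 : MvPolynomial (Fin d) ℝ) x = 1 := by simp [ev]
@[simp] lemma ev_zero (x : Euc d) : ev (0 : MvPolynomial (Fin d) ℝ) x = 0 := by simp [ev]
@[simp] lemma ev_X (i : Fin d) (x : Euc d) : ev (MvPolynomial.X i) x = x i := by simp [ev]
@[simp] lemma ev_sum {ι : Type*} (s : Finset ι) (f : ι → MvPolynomial (Fin d) ℝ) (x : Euc d) :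
    ev (∑ i ∈ s, f i) x = ∑ i ∈ s, ev (f i) x := by
  simp [ev]

lemma ev_contDiff (p : MvPolynomial (Fin d) ℝ) {k : WithTop ℕ∞} : ContDiff ℝ k (ev p) := by
  induction p using MvPolynomial.induction_on with
  | C a => 
    have : ev (MvPolynomial.C a : MvPolynomial (Fin d) ℝ) = fun _ => a := by ext x; simp
    rw [this]; exact contDiff_const
  | add p q hp hq =>
    have : ev (p + q) = fun x => ev p x + ev q x := by ext x; simp
    rw [this]; exact hp.add hq
  | mul_X p i hp =>
    have : ev (p * MvPolynomial.X i) = fun x => ev p x * x i := by ext x; simp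
    rw [this]; exact hp.mul (by fun_prop)

lemma ev_continuous (p : MvPolynomial (Fin d) ℝ) : Continuous (ev p) :=
  (ev_contDiff p (k := 0)).continuous

lemma ev_differentiable (p : MvPolynomial (Fin d) ℝ) : Differentiable ℝ (ev p) :=
  (ev_contDiff p (k := 1)).differentiable (by norm_num)

lemma fderiv_ev (p : MvPolynomial (Fin d) ℝ) (x : Euc d) (i : Fin d) :
    fderiv ℝ (ev p) x (EuclideanSpace.single i 1) = ev (MvPolynomial.pderiv i p) x := by
  induction p using MvPolynomial.induction_on with
  | C a => 
    have : ev (MvPolynomial.C a : MvPolynomial (Fin d) ℝ) = fun _ => a := by ext x; simp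
    rw [this]; simp
  | add p q hp hq =>
    have : ev (p + q) = fun x => ev p x + ev q x := by ext x; simp
    rw [this, fderiv_fun_add (ev_differentiable p x) (ev_differentiable q x)]
    simp [hp, hq]
  | mul_X p j hp =>
    have : ev (p * MvPolynomial.X j) = fun x => ev p x * x j := by ext x; simp
    have h2 : HasFDerivAt (fun x : Euc d => x j) (EuclideanSpace.proj j : Euc d →L[ℝ] ℝ) x :=
      (EuclideanSpace.proj j : Euc d →L[ℝ] ℝ).hasFDerivAt
    rw [this, ((ev_differentiable p x).hasFDerivAt.fun_mul h2).fderiv]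
    simp [hp, MvPolynomial.pderiv_X, Pi.single_apply]
    split_ifs with h1
    · simp
    · simp

lemma laplacian_ev (p : MvPolynomial (Fin d) ℝ) (x : Euc d) :
    laplacian (ev p) x = ev (lap p) x := by
  unfold laplacian lap
  rw [ev_sum]
  refine Finset.sum_congr rfl fun i _ => ?_
  have : (fun y => fderiv ℝ (ev p) y (EuclideanSpace.single i 1)) =
      ev (MvPolynomial.pderiv i p) := by
    ext y; exact fderiv_ev p y i
  rw [this, fderiv_ev]

lemma lap_add (p q : MvPolynomial (Fin d) ℝ) : lap (p + q) = lap p + lap q := by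
  simp [lap, Finset.sum_add_distrib]
lemma lap_sub (p q : MvPolynomial (Fin d) ℝ) : lap (p - q) = lap p - lap q := by
  simp [lap, Finset.sum_sub_distrib]
lemma lap_smul (a : ℝ) (p : MvPolynomial (Fin d) ℝ) : lap (a • p) = a • lap p := by
  simp [lap, Finset.smul_sum]

lemma pderiv_comm (i j : Fin d) (p : MvPolynomial (Fin d) ℝ) :
    MvPolynomial.pderiv i (MvPolynomial.pderiv j p) =
      MvPolynomial.pderiv j (MvPolynomial.pderiv i p) := by
  by_cases h : i = j
  · rw [h]
  ext m
  simp only [MvPolynomial.coeff_pderiv]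
  rw [add_right_comm]
  simp [h, Ne.symm h]
  ring

lemma lap_pderiv (j : Fin d) (p : MvPolynomial (Fin d) ℝ) :
    lap (MvPolynomial.pderiv j p) = MvPolynomial.pderiv j (lap p) := by
  unfold lap
  rw [map_sum]
  refine Finset.sum_congr rfl fun i _ => ?_
  rw [pderiv_comm i j p, pderiv_comm i j]

lemma ev_injective_of_ball {p : MvPolynomial (Fin d) ℝ} {r : ℝ} (hr : 0 < r)
    (h : ∀ x : Euc d, ‖x‖ < r → ev p x = 0) : p = 0 := by
  have hc : Continuous (fun v : Fin d → ℝ => ‖(WithLp.toLp 2 v : Euc d)‖) := by fun_prop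
  have h0 : {v : Fin d → ℝ | ‖(WithLp.toLp 2 v : Euc d)‖ < r} ∈ 𝓝 (0 : Fin d → ℝ) := by
    apply (isOpen_lt hc continuous_const).mem_nhds
    simpa using hr
  obtain ⟨s, hs, hsub⟩ := Metric.mem_nhds_iff.1 h0
  refine MvPolynomial.funext_set (fun _ => Metric.ball (0 : ℝ) (s / 2)) (fun i => ?_) fun x hx => ?_
  · rw [Real.ball_eq_Ioo]
    exact Set.Ioo_infinite (by linarith)
  · have : x ∈ Metric.ball (0 : Fin d → ℝ) s := by
      rw [mem_ball_zero_iff]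
      refine lt_of_le_of_lt ((pi_norm_le_iff_of_nonneg (by positivity)).2 fun i => ?_)
        (half_lt_self hs)
      have := hx i (mem_univ i)
      rw [mem_ball_zero_iff] at this
      exact this.le
    have := h (WithLp.toLp 2 x) (hsub this)
    simpa [ev] using this

/-- No interior local maximum where the Laplacian is positive. -/
lemma not_isLocalMax_of_laplacian_pos {v : Euc d → ℝ} {x : Euc d} {s : Set (Euc d)}
    (hs : IsOpen s) (hx : x ∈ s) (hv : ContDiffOn ℝ 2 v s) (hl : 0 < laplacian v x) :
    ¬ IsLocalMax v x := by
  intro hmax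
  obtain ⟨i, -, hi⟩ := Finset.exists_lt_of_sum_lt (s := Finset.univ) (f := fun _ : Fin d => (0:ℝ))
    (g := fun i : Fin d => fderiv ℝ (fun y => fderiv ℝ v y (EuclideanSpace.single i 1)) x
    (EuclideanSpace.single i 1)) (by simpa [laplacian] using hl)
  set e : Euc d := EuclideanSpace.single i 1 with he
  set f : ℝ → ℝ := fun t => v (x + t • e) with hf
  have hline : ∀ t : ℝ, HasDerivAt (fun t : ℝ => x + t • e) e t := by
    intro t
    simpa using ((hasDerivAt_id t).smul_const e).const_add x
  have hcont : Continuous fun t : ℝ => x + t • e := by fun_prop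
  have hnh : ∀ᶠ t in 𝓝 (0:ℝ), x + t • e ∈ s := 
    hcont.continuousAt.eventually (hs.mem_nhds (by simpa using hx))
  have hd1 : ∀ y ∈ s, DifferentiableAt ℝ v y := fun y hy =>
    (hv.differentiableOn (by norm_num)).differentiableAt (hs.mem_nhds hy)
  have hder : deriv f =ᶠ[𝓝 0] fun t => fderiv ℝ v (x + t • e) e := by
    filter_upwards [hnh] with t ht
    exact ((hd1 _ ht).hasFDerivAt.comp_hasDerivAt t (hline t)).deriv
  have hd2 : DifferentiableAt ℝ (fun y => fderiv ℝ v y e) x := by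
    have : ContDiffOn ℝ 1 (fun y => fderiv ℝ v y) s :=
      hv.fderiv_of_isOpen hs (by norm_num)
    have h2 := (this.differentiableOn (by norm_num)).differentiableAt (hs.mem_nhds hx)
    exact h2.clm_apply (differentiableAt_const e)
  have hd3 : deriv (deriv f) 0 = fderiv ℝ (fun y => fderiv ℝ v y e) x e := by
    rw [hder.deriv_eq]
    have h2 : HasFDerivAt (fun y => fderiv ℝ v y e) (fderiv ℝ (fun y => fderiv ℝ v y e) x)
        (x + (0:ℝ) • e) := by simpa using hd2.hasFDerivAt
    exact (h2.comp_hasDerivAt (0:ℝ) (hline 0)).deriv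
  have hpos : 0 < deriv (deriv f) 0 := by rw [hd3]; exact hi
  have hfmax : IsLocalMax f 0 := by
    have h1 : ContinuousAt (fun t : ℝ => x + t • e) 0 := hcont.continuousAt
    have h2 : Tendsto (fun t : ℝ => x + t • e) (𝓝 0) (𝓝 x) := by
      simpa [ContinuousAt] using h1
    have := h2.eventually hmax
    show ∀ᶠ t in 𝓝 0, f t ≤ f 0
    simpa [hf] using this
  have hfc : ContinuousAt f 0 := by
    have := ((hd1 (x + (0:ℝ) • e) (by simpa using hx)).hasFDerivAt.comp_hasDerivAt (0:ℝ) (hline 0))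
    exact this.continuousAt
  have hmin := isLocalMin_of_deriv_deriv_pos hpos hfmax.deriv_eq_zero hfc
  have hconst : f =ᶠ[𝓝 0] fun _ => f 0 := by
    filter_upwards [hmin, hfmax] with t h1 h2
    exact le_antisymm h2 h1
  have : deriv (deriv f) 0 = 0 := by
    rw [hconst.deriv.deriv_eq]; simp
  linarith

end Basics

/-! ### Dirichlet problem for polynomials on the ball and polynomial approximation -/

section Fischer
variable {d : ℕ}

/-- The polynomial `|x|^2`. -/
def r2 (d : ℕ) : MvPolynomial (Fin d) ℝ := ∑ i, MvPolynomial.X i ^ 2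

lemma ev_r2 (x : Euc d) : ev (r2 d) x = ‖x‖ ^ 2 := by
  simp [r2, EuclideanSpace.norm_sq_eq]

lemma lap_r2 : lap (r2 d) = MvPolynomial.C (2 * d : ℝ) := by
  have h1 : ∀ i : Fin d, MvPolynomial.pderiv i (r2 d) = 2 * MvPolynomial.X i := by
    intro i
    simp only [r2, map_sum, MvPolynomial.pderiv_pow, MvPolynomial.pderiv_X]
    rw [Finset.sum_eq_single i]
    · simp
    · intro j _ hj
      simp [hj.symm]
    · simp
  unfold lap
  have h2 : ∀ i : Fin d, MvPolynomial.pderiv i (2 * MvPolynomial.X i : MvPolynomial (Fin d) ℝ)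
      = 2 := by
    intro i
    have : (2 : MvPolynomial (Fin d) ℝ) = MvPolynomial.C 2 := (map_ofNat _ 2).symm
    rw [this, MvPolynomial.pderiv_C_mul]
    simp
  simp only [h1, h2]
  have h3 : (MvPolynomial.C 2 : MvPolynomial (Fin d) ℝ) = 2 := map_ofNat _ 2
  simp [h3]
  ring

lemma totalDegree_pderiv_le (i : Fin d) (p : MvPolynomial (Fin d) ℝ) :
    (MvPolynomial.pderiv i p).totalDegree ≤ p.totalDegree - 1 := by
  refine Finset.sup_le fun m hm => ?_
  rw [MvPolynomial.mem_support_iff, MvPolynomial.coeff_pderiv] at hm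
  have h1 : MvPolynomial.coeff (m + Finsupp.single i 1) p ≠ 0 := left_ne_zero_of_mul hm
  have h2 := MvPolynomial.le_totalDegree (MvPolynomial.mem_support_iff.2 h1)
  rw [Finsupp.sum_add_index' (fun _ => rfl) (fun _ _ _ => rfl),
    Finsupp.sum_single_index rfl] at h2
  omega

lemma totalDegree_lap_le (p : MvPolynomial (Fin d) ℝ) {m : ℕ} (h : p.totalDegree ≤ m + 2) :
    (lap p).totalDegree ≤ m := by
  refine MvPolynomial.totalDegree_finsetSum_le fun i _ => ?_
  have h1 := totalDegree_pderiv_le i p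
  have h2 := totalDegree_pderiv_le i (MvPolynomial.pderiv i p)
  omega

lemma totalDegree_r2 : (r2 d).totalDegree ≤ 2 := by
  refine MvPolynomial.totalDegree_finsetSum_le fun i _ => ?_
  simp

lemma sphere_max (hd : 0 < d) {p : MvPolynomial (Fin d) ℝ} (hp : lap p = 0)
    (h1 : ∀ x : Euc d, ‖x‖ = 1 → ev p x ≤ 0) (x : Euc d) (hx : ‖x‖ ≤ 1) : ev p x ≤ 0 := by
  refine le_of_forall_pos_le_add fun ε hε => ?_
  set q := p + ε • r2 d with hq
  obtain ⟨z, hz, hmax⟩ := (isCompact_closedBall (0 : Euc d) 1).exists_isMaxOn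
    ⟨0, by simp⟩ (ev_continuous q).continuousOn
  have hz1 : ‖z‖ = 1 := by
    by_contra hne
    have hzlt : ‖z‖ < 1 := lt_of_le_of_ne (by simpa using hz) hne
    refine not_isLocalMax_of_laplacian_pos (v := ev q) (x := z) isOpen_univ (mem_univ _)
      (ev_contDiff q).contDiffOn ?_ (hmax.isLocalMax ?_)
    · rw [laplacian_ev, hq, lap_add, lap_smul, hp, lap_r2]
      simp only [zero_add, ev_smul, ev_C]
      have : (0:ℝ) < d := by exact_mod_cast hd
      positivity
    · exact closedBall_mem_nhds_of_mem (by simpa using hzlt)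
  have h2 := hmax (show x ∈ closedBall (0 : Euc d) 1 by simpa using hx)
  simp only [mem_ofPred_eq, hq, ev_add, ev_smul, ev_r2, hz1] at h2
  have := h1 z hz1
  nlinarith [mul_nonneg hε.le (sq_nonneg ‖x‖)]

lemma fischer_injective (hd : 0 < d) {q : MvPolynomial (Fin d) ℝ}
    (h : lap ((1 - r2 d) * q) = 0) : q = 0 := by
  have hs : ∀ x : Euc d, ‖x‖ = 1 → ev ((1 - r2 d) * q) x = 0 := by
    intro x hx
    simp [ev_r2, hx]
  refine ev_injective_of_ball one_pos fun x hx => ?_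
  have h1 := sphere_max hd h (fun x hx => (hs x hx).le) x hx.le
  have h2 := sphere_max hd (p := (-1 : ℝ) • ((1 - r2 d) * q)) (by rw [lap_smul, h, smul_zero])
    (fun x hx => by rw [ev_smul, hs x hx]; simp) x hx.le
  have h3 : ev ((1 - r2 d) * q) x = 0 := by
    rw [ev_smul] at h2; linarith
  rw [ev_mul] at h3
  rcases mul_eq_zero.1 h3 with h4 | h4
  · simp [ev_r2] at h4
    nlinarith [norm_nonneg x]
  · exact h4

/-- Solution of the Dirichlet problem with polynomial data on the unit ball. -/
lemma fischer (hd : 0 < d) (p : MvPolynomial (Fin d) ℝ) :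
    ∃ h : MvPolynomial (Fin d) ℝ, lap h = 0 ∧ ∀ x : Euc d, ‖x‖ = 1 → ev h x = ev p x := by
  set m := p.totalDegree
  let V := MvPolynomial.restrictTotalDegree (Fin d) ℝ m
  have hmap : ∀ q ∈ V, lap ((1 - r2 d) * q) ∈ V := by
    intro q hq
    rw [MvPolynomial.mem_restrictTotalDegree] at hq ⊢
    apply totalDegree_lap_le
    refine (MvPolynomial.totalDegree_mul _ _).trans ?_
    have : (1 - r2 d).totalDegree ≤ 2 := by
      refine (MvPolynomial.totalDegree_sub _ _).trans ?_
      simp [totalDegree_r2]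
    omega
  let T : V →ₗ[ℝ] V :=
    { toFun := fun q => ⟨lap ((1 - r2 d) * q.1), hmap q.1 q.2⟩
      map_add' := fun a b => by
        ext1; simp [mul_add, lap_add]
      map_smul' := fun a b => by
        ext1; simp [lap_smul] }
  have hinj : Function.Injective T := by
    rw [← LinearMap.ker_eq_bot, LinearMap.ker_eq_bot']
    intro q hq
    have : lap ((1 - r2 d) * q.1) = 0 := congrArg Subtype.val hq
    exact Subtype.ext (fischer_injective hd this)
  have hsurj : Function.Surjective T := LinearMap.injective_iff_surjective.1 hinj
  have hlp : lap p ∈ V := by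
    rw [MvPolynomial.mem_restrictTotalDegree]
    exact totalDegree_lap_le p (by omega)
  obtain ⟨q, hq⟩ := hsurj ⟨lap p, hlp⟩
  have hq' : lap ((1 - r2 d) * q.1) = lap p := congrArg Subtype.val hq
  refine ⟨p - (1 - r2 d) * q.1, by rw [lap_sub, hq', sub_self], fun x hx => ?_⟩
  simp [ev_r2, hx]

lemma aeval_apply_eq_ev (p : MvPolynomial (Fin d) ℝ) (z : sphere (0 : Euc d) 1) :
    (MvPolynomial.aeval (R := ℝ) (fun i : Fin d =>
      (⟨fun x => x.1 i, by fun_prop⟩ : C(sphere (0 : Euc d) 1, ℝ))) p) z = ev p z.1 := by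
  induction p using MvPolynomial.induction_on with
  | C a => simp
  | add p q hp hq => rw [map_add, ContinuousMap.add_apply, hp, hq, ev_add]
  | mul_X p i hp =>
    rw [map_mul, ContinuousMap.mul_apply, hp, ev_mul, ev_X, MvPolynomial.aeval_X]
    rfl

/-- Stone-Weierstrass on the unit sphere. -/
lemma poly_approx_sphere (f : Euc d → ℝ) (hf : ContinuousOn f (sphere 0 1)) {ε : ℝ} (hε : 0 < ε) :
    ∃ p : MvPolynomial (Fin d) ℝ, ∀ x : Euc d, ‖x‖ = 1 → |ev p x - f x| < ε := by
  let co : Fin d → C(sphere (0 : Euc d) 1, ℝ) := fun i => ⟨fun x => x.1 i, by fun_prop⟩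
  let A : Subalgebra ℝ C(sphere (0 : Euc d) 1, ℝ) := (MvPolynomial.aeval (R := ℝ) co).range
  have hA : A.SeparatesPoints := by
    intro x y hxy
    have : ∃ i, x.1 i ≠ y.1 i := by
      by_contra hcon
      push Not at hcon
      exact hxy (Subtype.ext (by ext i; exact hcon i))
    obtain ⟨i, hi⟩ := this
    exact ⟨co i, ⟨co i, ⟨MvPolynomial.X i, by simp⟩, rfl⟩, hi⟩
  obtain ⟨⟨g, hg⟩, h⟩ := ContinuousMap.exists_mem_subalgebra_near_continuous_of_separatesPoints A hA
    (fun x : sphere (0 : Euc d) 1 => f x.1) (continuousOn_iff_continuous_domRestrict.1 hf) ε hε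
  obtain ⟨p, hp⟩ := hg
  refine ⟨p, fun x hx => ?_⟩
  have h1 := h ⟨x, by simpa using hx⟩
  have h2 : g ⟨x, by simpa using hx⟩ = ev p x := by
    rw [← hp]
    exact aeval_apply_eq_ev p _
  rw [Real.norm_eq_abs] at h1
  rw [← h2]
  exact h1

end Fischer

/-! ### Reflection and approximation of Neumann harmonic functions -/

section Reflect
variable {n : ℕ}

/-- Sign of the reflection. -/
def sgn (n : ℕ) (i : Fin (n + 1)) : ℝ := if i = Fin.last n then -1 else 1

lemma sgn_sq (i : Fin (n + 1)) : sgn n i * sgn n i = 1 := by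
  unfold sgn; split_ifs <;> norm_num

/-- Reflection in the last coordinate, as a linear isometry. -/
def sig (n : ℕ) : Euc (n + 1) ≃ₗᵢ[ℝ] Euc (n + 1) :=
  LinearIsometryEquiv.piLpCongrRight 2
    (fun i : Fin (n + 1) => if i = Fin.last n then LinearIsometryEquiv.neg ℝ
      else LinearIsometryEquiv.refl ℝ ℝ)

lemma sig_apply (x : Euc (n + 1)) (i : Fin (n + 1)) : sig n x i = sgn n i * x i := by
  simp only [sig, sgn, LinearIsometryEquiv.piLpCongrRight_apply]
  split_ifs <;> simp

lemma sig_sig (x : Euc (n + 1)) : sig n (sig n x) = x := by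
  ext i; rw [sig_apply, sig_apply, ← mul_assoc, sgn_sq, one_mul]

lemma lastc_sig (x : Euc (n + 1)) : lastc (sig n x) = - lastc x := by
  simp [lastc, sig_apply, sgn]

/-- Reflection of polynomials. -/
def polyRefl (n : ℕ) : MvPolynomial (Fin (n + 1)) ℝ →ₐ[ℝ] MvPolynomial (Fin (n + 1)) ℝ :=
  MvPolynomial.aeval fun i => MvPolynomial.C (sgn n i) * MvPolynomial.X i

lemma ev_polyRefl (p : MvPolynomial (Fin (n + 1)) ℝ) (x : Euc (n + 1)) :
    ev (polyRefl n p) x = ev p (sig n x) := by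
  induction p using MvPolynomial.induction_on with
  | C a => simp [polyRefl]
  | add p q hp hq => simp [hp, hq]
  | mul_X p i hp =>
    have hX : polyRefl n (MvPolynomial.X i) = MvPolynomial.C (sgn n i) * MvPolynomial.X i := by
      simp [polyRefl]
    rw [map_mul, ev_mul, hp, hX]
    simp [sig_apply]

lemma pderiv_polyRefl (p : MvPolynomial (Fin (n + 1)) ℝ) (i : Fin (n + 1)) :
    MvPolynomial.pderiv i (polyRefl n p) =
      MvPolynomial.C (sgn n i) * polyRefl n (MvPolynomial.pderiv i p) := by
  induction p using MvPolynomial.induction_on with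
  | C a => simp [polyRefl]
  | add p q hp hq => simp [hp, hq, mul_add]
  | mul_X p j hp =>
    have hX : polyRefl n (MvPolynomial.X j) = MvPolynomial.C (sgn n j) * MvPolynomial.X j := by
      simp [polyRefl]
    rw [map_mul, MvPolynomial.pderiv_mul, MvPolynomial.pderiv_mul, hp, hX,
      MvPolynomial.pderiv_C_mul, map_add, map_mul, map_mul, hX]
    by_cases hij : j = i
    · subst hij
      simp; ring
    · simp [MvPolynomial.pderiv_X_of_ne hij]; ring

lemma lap_polyRefl (p : MvPolynomial (Fin (n + 1)) ℝ) :
    lap (polyRefl n p) = polyRefl n (lap p) := by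
  unfold lap
  rw [map_sum]
  refine Finset.sum_congr rfl fun i _ => ?_
  rw [pderiv_polyRefl, MvPolynomial.pderiv_C_mul, pderiv_polyRefl, ← mul_assoc,
    ← MvPolynomial.C_mul, sgn_sq]
  simp

/-- An even polynomial has vanishing normal derivative on the flat face. -/
lemma pderiv_even (p : MvPolynomial (Fin (n + 1)) ℝ) (hp : polyRefl n p = p) (x : Euc (n + 1))
    (hx : lastc x = 0) : ev (MvPolynomial.pderiv (Fin.last n) p) x = 0 := by
  have h1 := pderiv_polyRefl p (Fin.last n)
  rw [hp] at h1
  have h2 := congrArg (fun q => ev q x) h1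
  have h3 : sig n x = x := by
    ext i
    rw [sig_apply]
    by_cases hi : i = Fin.last n
    · subst hi
      have : x (Fin.last n) = 0 := hx
      simp [this]
    · simp [sgn, hi]
  simp [ev_polyRefl, h3, sgn] at h2
  linarith

/-- Fold the space onto the upper half space. -/
def fold (y : Euc (n + 1)) : Euc (n + 1) :=
  WithLp.toLp 2 fun i => if i = Fin.last n then |y i| else y i

lemma fold_continuous : Continuous (fold (n := n)) := by
  unfold fold
  refine (PiLp.continuous_toLp 2 _).comp (continuous_pi fun i => ?_)
  split_ifs
  · fun_prop
  · fun_prop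

lemma norm_fold (y : Euc (n + 1)) : ‖fold y‖ = ‖y‖ := by
  rw [EuclideanSpace.norm_eq, EuclideanSpace.norm_eq]
  congr 1
  refine Finset.sum_congr rfl fun i _ => ?_
  simp only [fold]
  split_ifs <;> simp

lemma lastc_fold (y : Euc (n + 1)) : lastc (fold y) = |lastc y| := by
  simp [lastc, fold]

lemma fold_sig (y : Euc (n + 1)) : fold (sig n y) = fold y := by
  ext i
  simp only [fold, sig_apply, sgn]
  split_ifs <;> simp

lemma fold_of_nonneg (y : Euc (n + 1)) (hy : 0 ≤ lastc y) : fold y = y := by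
  ext i
  simp only [fold]
  split_ifs with h
  · subst h; exact abs_of_nonneg hy
  · rfl

lemma lastc_continuous : Continuous (lastc (n := n)) := by
  unfold lastc; fun_prop

lemma isOpen_unitHalfBall : IsOpen (unitHalfBall n) :=
  (isOpen_lt continuous_norm continuous_const).inter (isOpen_lt continuous_const lastc_continuous)

lemma closure_unitHalfBall_subset :
    closure (unitHalfBall n) ⊆ {y | ‖y‖ ≤ 1 ∧ 0 ≤ lastc y} := by
  refine closure_minimal (fun y hy => ⟨hy.1.le, hy.2.le⟩) ?_
  exact (isClosed_le continuous_norm continuous_const).inter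
    (isClosed_le continuous_const lastc_continuous)

lemma subset_closure_unitHalfBall {y : Euc (n + 1)} (h1 : ‖y‖ ≤ 1) (h2 : 0 ≤ lastc y) :
    y ∈ closure (unitHalfBall n) := by
  set e : Euc (n + 1) := EuclideanSpace.single (Fin.last n) 1 with he
  have hen : ‖e‖ = 1 := by simp [he]
  have hc : Continuous fun t : ℝ => (1 - t) • y + (t / 2) • e := by fun_prop
  have ht : Tendsto (fun t : ℝ => (1 - t) • y + (t / 2) • e) (𝓝[>] 0) (𝓝 y) := by
    have := (hc.tendsto 0).mono_left (nhdsWithin_le_nhds (s := Ioi 0))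
    simpa using this
  refine mem_closure_of_tendsto ht ?_
  have : Ioo (0:ℝ) 1 ∈ 𝓝[>] (0:ℝ) := Ioo_mem_nhdsGT one_pos
  filter_upwards [this] with t ht
  constructor
  · calc ‖(1 - t) • y + (t / 2) • e‖ ≤ ‖(1 - t) • y‖ + ‖(t / 2) • e‖ := norm_add_le _ _
      _ = (1 - t) * ‖y‖ + t / 2 := by
        rw [norm_smul, norm_smul, hen, Real.norm_of_nonneg (by linarith [ht.2]),
          Real.norm_of_nonneg (by linarith [ht.1])]; ring
      _ < 1 := by nlinarith [ht.1, ht.2]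
  · have : lastc ((1 - t) • y + (t / 2) • e) = (1 - t) * lastc y + t / 2 := by
      simp [lastc, he]
    rw [this]
    nlinarith [ht.1, ht.2]

lemma laplacian_add_ev {d : ℕ} {u : Euc d → ℝ} {s : Set (Euc d)} (hs : IsOpen s)
    (hu : ContDiffOn ℝ 2 u s) (q : MvPolynomial (Fin d) ℝ) {x : Euc d} (hx : x ∈ s) :
    laplacian (fun y => u y + ev q y) x = laplacian u x + ev (lap q) x := by
  rw [← laplacian_ev]
  unfold laplacian
  rw [← Finset.sum_add_distrib]
  refine Finset.sum_congr rfl fun i _ => ?_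
  have hd1 : ∀ y ∈ s, DifferentiableAt ℝ u y := fun y hy =>
    (hu.differentiableOn (by norm_num)).differentiableAt (hs.mem_nhds hy)
  have h1 : (fun y => fderiv ℝ (fun y => u y + ev q y) y (EuclideanSpace.single i 1)) =ᶠ[𝓝 x]
      fun y => fderiv ℝ u y (EuclideanSpace.single i 1) +
        fderiv ℝ (ev q) y (EuclideanSpace.single i 1) := by
    filter_upwards [hs.mem_nhds hx] with y hy
    rw [fderiv_fun_add (hd1 y hy) (ev_differentiable q y)]
    rfl
  have hd2 : ∀ {v : Euc d → ℝ}, ContDiffOn ℝ 2 v s →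
      DifferentiableAt ℝ (fun y => fderiv ℝ v y (EuclideanSpace.single i 1)) x := by
    intro v hv
    have : ContDiffOn ℝ 1 (fun y => fderiv ℝ v y) s :=
      hv.fderiv_of_isOpen hs (by norm_num)
    have h2 := (this.differentiableOn (by norm_num)).differentiableAt (hs.mem_nhds hx)
    exact h2.clm_apply (differentiableAt_const _)
  rw [h1.fderiv_eq, fderiv_fun_add (hd2 hu) (hd2 (ev_contDiff q).contDiffOn)]
  rfl

/-- Maximum principle for the mixed boundary value problem in the half ball. -/
lemma half_max {u : Euc (n + 1) → ℝ} (hc : ContinuousOn u (closure (unitHalfBall n)))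
    (hu : HarmonicOn u (unitHalfBall n))
    (hflat : ∀ y ∈ flatFace n, ∃ L : Euc (n + 1) →L[ℝ] ℝ,
      HasFDerivWithinAt u L (closure (unitHalfBall n)) y ∧
        L (EuclideanSpace.single (Fin.last n) 1) = 0)
    {a : ℝ} (hcap : ∀ y, ‖y‖ = 1 → 0 ≤ lastc y → u y ≤ a)
    {y : Euc (n + 1)} (hy : y ∈ closure (unitHalfBall n)) : u y ≤ a := by
  refine le_of_forall_pos_le_add fun δ hδ => ?_
  set e : Euc (n + 1) := EuclideanSpace.single (Fin.last n) 1 with he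
  set q : MvPolynomial (Fin (n + 1)) ℝ := (δ / 2) • (MvPolynomial.X (Fin.last n) + r2 (n + 1)) with hq
  have hqv : ∀ z, ev q z = δ / 2 * (lastc z + ‖z‖ ^ 2) := by
    intro z; simp [hq, ev_r2, lastc]; ring
  have hcomp : IsCompact (closure (unitHalfBall n)) := by
    refine (isCompact_closedBall (0 : Euc (n + 1)) 1).of_isClosed_subset isClosed_closure ?_
    intro z hz
    simpa using (closure_unitHalfBall_subset hz).1
  obtain ⟨z, hz, hmax⟩ := hcomp.exists_isMaxOn ⟨y, hy⟩
    (hc.add (ev_continuous q).continuousOn)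
  have hz' := closure_unitHalfBall_subset hz
  have hz1 : ‖z‖ = 1 := by
    by_contra hne
    have hzlt : ‖z‖ < 1 := lt_of_le_of_ne hz'.1 hne
    rcases hz'.2.lt_or_eq with hpos | hzero
    · have hzi : z ∈ unitHalfBall n := ⟨hzlt, hpos⟩
      refine not_isLocalMax_of_laplacian_pos (v := fun x => u x + ev q x) (x := z)
        isOpen_unitHalfBall hzi (hu.1.add (ev_contDiff q).contDiffOn) ?_
        (hmax.isLocalMax (mem_of_superset (isOpen_unitHalfBall.mem_nhds hzi) subset_closure))
      rw [laplacian_add_ev isOpen_unitHalfBall hu.1 q hzi, hu.2 z hzi, hq, lap_smul, lap_add, lap_r2]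
      have : lap (MvPolynomial.X (Fin.last n) : MvPolynomial (Fin (n + 1)) ℝ) = 0 := by
        refine Finset.sum_eq_zero fun i _ => ?_
        rw [MvPolynomial.pderiv_X, Pi.single_apply]
        split_ifs <;> simp
      rw [this, ev_smul, ev_add, ev_zero, ev_C]
      positivity
    · obtain ⟨L, hL, hL0⟩ := hflat z ⟨hz'.1, hzero.symm⟩
      have hv := hL.add ((ev_differentiable q z).hasFDerivAt.hasFDerivWithinAt
        (s := closure (unitHalfBall n)))
      have hderiv : (L + fderiv ℝ (ev q) z) e = δ / 2 := by
        rw [add_apply, hL0, he, fderiv_ev]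
        have : MvPolynomial.pderiv (Fin.last n) (r2 (n + 1)) = 2 * MvPolynomial.X (Fin.last n) := by
          simp only [r2, map_sum, MvPolynomial.pderiv_pow, MvPolynomial.pderiv_X]
          rw [Finset.sum_eq_single (Fin.last n)]
          · simp
          · intro j _ hj
            simp [hj.symm]
          · simp
        have hz0 : z (Fin.last n) = 0 := hzero.symm
        simp [hq, this, hz0]
      -- the one-sided derivative along `e`
      have hcl : Continuous fun t : ℝ => z + t • e := by fun_prop
      have hsmall : ∀ᶠ t in 𝓝[>] (0:ℝ), z + t • e ∈ closure (unitHalfBall n) := by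
        have h1 : ∀ᶠ t in 𝓝 (0:ℝ), ‖z + t • e‖ < 1 := by
          apply (hcl.norm.tendsto 0).eventually (gt_mem_nhds (by simpa using hzlt))
        filter_upwards [nhdsWithin_le_nhds h1, self_mem_nhdsWithin] with t ht1 ht2
        refine subset_closure ⟨ht1, ?_⟩
        have : lastc (z + t • e) = t := by
          have hz0 : z (Fin.last n) = 0 := hzero.symm
          simp [lastc, he, hz0]
        rw [this]; exact ht2
      have hlim : Tendsto (fun t : ℝ => t⁻¹ * ((u (z + t • e) + ev q (z + t • e)) - (u z + ev q z)))
          (𝓝[>] 0) (𝓝 (δ / 2)) := by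
        have hdl : Tendsto (fun t : ℝ => t • e) (𝓝[>] 0) (𝓝 0) := by
          have h0 : Continuous fun t : ℝ => t • e := by fun_prop
          simpa using (h0.tendsto 0).mono_left (nhdsWithin_le_nhds (s := Ioi 0))
        have hcd : Tendsto (fun t : ℝ => t⁻¹ • (t • e)) (𝓝[>] 0) (𝓝 e) := by
          refine tendsto_const_nhds.congr' ?_
          filter_upwards [self_mem_nhdsWithin] with t ht
          have ht0 : (0:ℝ) < t := ht
          rw [smul_smul, inv_mul_cancel₀ ht0.ne', one_smul]
        have hr := hv.lim hdl hsmall hcd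
        rw [hderiv] at hr
        exact hr
      have hle : δ / 2 ≤ 0 := by
        refine le_of_tendsto hlim ?_
        filter_upwards [hsmall, self_mem_nhdsWithin] with t ht1 ht2
        have := hmax ht1
        simp only [mem_ofPred_eq, Pi.add_apply] at this
        have ht0 : (0:ℝ) < t := ht2
        have hinv : 0 < t⁻¹ := by positivity
        have h3 : (u (z + t • e) + ev q (z + t • e)) - (u z + ev q z) ≤ 0 := by linarith
        exact mul_nonpos_of_nonneg_of_nonpos hinv.le h3
      linarith
  have h2 := hmax hy
  simp only [mem_ofPred_eq, Pi.add_apply, hqv] at h2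
  have h3 := hcap z hz1 hz'.2
  have h4 : lastc z ≤ 1 := by
    have : |z (Fin.last n)| ≤ ‖z‖ := by
      simpa using PiLp.norm_apply_le z (Fin.last n)
    rw [hz1] at this
    exact (le_abs_self _).trans this
  have h5 := (closure_unitHalfBall_subset hy).2
  rw [hz1] at h2
  nlinarith [sq_nonneg ‖y‖, mul_nonneg hδ.le h5, mul_nonneg hδ.le (sq_nonneg ‖y‖)]

lemma harmonicOn_neg {d : ℕ} {u : Euc d → ℝ} {s : Set (Euc d)} (h : HarmonicOn u s) :
    HarmonicOn (fun y => - u y) s := by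
  refine ⟨h.1.neg, fun x hx => ?_⟩
  have h2 := h.2 x hx
  unfold laplacian at h2 ⊢
  simp only [fderiv_fun_neg, neg_apply, Finset.sum_neg_distrib, h2, neg_zero]

lemma harmonicOn_add_ev {d : ℕ} {u : Euc d → ℝ} {s : Set (Euc d)} (hs : IsOpen s)
    (h : HarmonicOn u s) {q : MvPolynomial (Fin d) ℝ} (hq : lap q = 0) :
    HarmonicOn (fun y => u y + ev q y) s := by
  refine ⟨h.1.add (ev_contDiff q).contDiffOn, fun x hx => ?_⟩
  rw [laplacian_add_ev hs h.1 q hx, h.2 x hx, hq]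
  simp

/-- Neumann harmonic functions are uniform limits of even harmonic polynomials. -/
lemma neumann_approx {g : Euc (n + 1) → ℝ} (hc : ContinuousOn g (closure (unitHalfBall n)))
    (hu : HarmonicOn g (unitHalfBall n))
    (hflat : ∀ y ∈ flatFace n,
        DifferentiableWithinAt ℝ g (closure (unitHalfBall n)) y ∧
        fderivWithin ℝ g (closure (unitHalfBall n)) y
          (EuclideanSpace.single (Fin.last n) 1) = 0) {ε : ℝ} (hε : 0 < ε) :
    ∃ h : MvPolynomial (Fin (n + 1)) ℝ, lap h = 0 ∧ polyRefl n h = h ∧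
      ∀ y ∈ closure (unitHalfBall n), |g y - ev h y| ≤ ε := by
  have hG : ContinuousOn (fun y => g (fold y)) (sphere 0 1) := by
    refine hc.comp fold_continuous.continuousOn fun y hy => ?_
    refine subset_closure_unitHalfBall ?_ ?_
    · rw [norm_fold]; simpa using (mem_sphere_zero_iff_norm.1 hy).le
    · rw [lastc_fold]; exact abs_nonneg _
  obtain ⟨p, hp⟩ := poly_approx_sphere _ hG hε
  obtain ⟨h0, hh0, hh0p⟩ := fischer (d := n + 1) (Nat.succ_pos n) p
  set h := (1 / 2 : ℝ) • (h0 + polyRefl n h0) with hh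
  have hS : ∀ q : MvPolynomial (Fin (n + 1)) ℝ, polyRefl n (polyRefl n q) = q := by
    intro q
    have : ev (polyRefl n (polyRefl n q) - q) = fun _ => 0 := by
      ext x; rw [ev_sub, ev_polyRefl, ev_polyRefl, sig_sig, sub_self]
    exact sub_eq_zero.1 (ev_injective_of_ball one_pos fun x _ => congrFun this x)
  have hlap : lap h = 0 := by
    rw [hh, lap_smul, lap_add, lap_polyRefl, hh0]; simp
  have heven : polyRefl n h = h := by
    rw [hh, map_smul, map_add, hS, add_comm h0]
  have hcap : ∀ y : Euc (n + 1), ‖y‖ = 1 → 0 ≤ lastc y → |g y - ev h y| ≤ ε := by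
    intro y hy1 hy2
    have h1 := hp y hy1
    have h2 := hp (sig n y) (by rw [LinearIsometryEquiv.norm_map, hy1])
    rw [fold_sig, fold_of_nonneg y hy2] at h2
    rw [fold_of_nonneg y hy2] at h1
    rw [hh, ev_smul, ev_add, ev_polyRefl, hh0p y hy1,
      hh0p (sig n y) (by rw [LinearIsometryEquiv.norm_map, hy1])]
    rw [abs_lt] at h1 h2
    rw [abs_le]
    constructor <;> linarith [h1.1, h1.2, h2.1, h2.2]
  have hDh : ∀ y ∈ flatFace n, fderiv ℝ (ev h) y (EuclideanSpace.single (Fin.last n) 1) = 0 := by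
    intro y hy
    rw [fderiv_ev, pderiv_even h heven y hy.2]
  have hneg : lap ((-1 : ℝ) • h) = 0 := by rw [lap_smul, hlap, smul_zero]
  refine ⟨h, hlap, heven, fun y hy => abs_le.2 ⟨?_, ?_⟩⟩
  · have := half_max (u := fun y => - g y + ev h y) (a := ε)
      (hc.neg.add (ev_continuous _).continuousOn)
      (harmonicOn_add_ev isOpen_unitHalfBall (harmonicOn_neg hu) hlap) (fun y hy => ?_)
      (fun y h1 h2 => ?_) hy
    · linarith
    · refine ⟨_, ((hflat y hy).1.hasFDerivWithinAt.neg).add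
        (ev_differentiable h y).hasFDerivAt.hasFDerivWithinAt, ?_⟩
      simp [(hflat y hy).2, hDh y hy]
    · linarith [(abs_le.1 (hcap y h1 h2)).1]
  · have := half_max (u := fun y => g y + ev ((-1 : ℝ) • h) y) (a := ε)
      (hc.add (ev_continuous _).continuousOn)
      (harmonicOn_add_ev isOpen_unitHalfBall hu hneg) (fun y hy => ?_)
      (fun y h1 h2 => ?_) hy
    · simp only [ev_smul] at this; linarith
    · refine ⟨_, ((hflat y hy).1.hasFDerivWithinAt).add
        (ev_differentiable ((-1 : ℝ) • h) y).hasFDerivAt.hasFDerivWithinAt, ?_⟩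
      have h5 := hDh y hy
      rw [fderiv_ev] at h5
      rw [add_apply, (hflat y hy).2, fderiv_ev, Derivation.map_smul, ev_smul, h5]
      simp
    · simp only [ev_smul]; linarith [(abs_le.1 (hcap y h1 h2)).2]

end Reflect

/-! ### Orthogonality, mean value property and interior bounds for harmonic polynomials -/

section MeanValue
variable {d : ℕ}

/-- The weight `(R^2 - |y|^2)_+`. -/
def wt (R : ℝ) (y : Euc d) : ℝ := max (R ^ 2 - ‖y‖ ^ 2) 0

lemma wt_nonneg (R : ℝ) (y : Euc d) : 0 ≤ wt R y := le_max_right _ _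

lemma wt_continuous (R : ℝ) : Continuous (wt (d := d) R) := by
  unfold wt; fun_prop

lemma wt_eq_zero {R : ℝ} (hR : 0 ≤ R) {y : Euc d} (hy : R ≤ ‖y‖) : wt R y = 0 := by
  unfold wt
  rw [max_eq_right]
  have := pow_le_pow_left₀ hR hy 2
  linarith

lemma wt_hasCompactSupport {R : ℝ} (hR : 0 ≤ R) : HasCompactSupport (wt (d := d) R) := by
  refine HasCompactSupport.intro (isCompact_closedBall (0 : Euc d) R) fun x hx => ?_
  refine wt_eq_zero hR ?_
  simp at hx
  exact hx.le

lemma wt_mul_integrable {R : ℝ} (hR : 0 ≤ R) {f : Euc d → ℝ} (hf : Continuous f) :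
    Integrable (fun y => wt R y * f y) :=
  ((wt_continuous R).mul hf).integrable_of_hasCompactSupport (wt_hasCompactSupport hR).mul_right

lemma hasDerivAt_sqpos (t : ℝ) : HasDerivAt (fun t : ℝ => max t 0 ^ 2) (2 * max t 0) t := by
  rcases lt_trichotomy t 0 with h | h | h
  · have : (fun t : ℝ => max t 0 ^ 2) =ᶠ[𝓝 t] fun _ => 0 := by
      filter_upwards [gt_mem_nhds h] with s hs
      rw [max_eq_right hs.le]; simp
    rw [max_eq_right h.le, mul_zero]
    exact (hasDerivAt_const t (0:ℝ)).congr_of_eventuallyEq this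
  · subst h
    rw [max_self, mul_zero]
    rw [hasDerivAt_iff_isLittleO]
    have h1 : (fun x : ℝ => x ^ 2) =o[𝓝 0] fun x => x := by
      simpa using isLittleO_pow_id (𝕜 := ℝ) (n := 2) (by norm_num)
    refine IsBigO.trans_isLittleO ?_ (by simpa using h1)
    refine IsBigO.of_bound 1 (Eventually.of_forall fun x => ?_)
    simp
    rcases le_total x 0 with hx | hx
    · rw [max_eq_right hx]; simp [sq_nonneg]
    · rw [max_eq_left hx]
  · have : (fun t : ℝ => max t 0 ^ 2) =ᶠ[𝓝 t] fun t => t ^ 2 := by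
      filter_upwards [lt_mem_nhds h] with s hs
      rw [max_eq_left hs.le]
    rw [max_eq_left h.le]
    refine HasDerivAt.congr_of_eventuallyEq ?_ this
    simpa using hasDerivAt_pow 2 t

lemma pderiv_r2 (i : Fin d) : MvPolynomial.pderiv i (r2 d) = 2 * MvPolynomial.X i := by
  simp only [r2, map_sum, MvPolynomial.pderiv_pow, MvPolynomial.pderiv_X]
  rw [Finset.sum_eq_single i]
  · simp
  · intro j _ hj
    simp [hj.symm]
  · simp

lemma wt_sq_hasFDerivAt (R : ℝ) (y : Euc d) :
    HasFDerivAt (fun y : Euc d => wt R y ^ 2)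
      ((2 * wt R y) • fderiv ℝ (ev (MvPolynomial.C (R ^ 2) - r2 d)) y) y := by
  have h := (ev_differentiable (MvPolynomial.C (R ^ 2) - r2 d) y).hasFDerivAt
  have h1 := hasDerivAt_sqpos (ev (MvPolynomial.C (R ^ 2) - r2 d) y)
  have := h1.comp_hasFDerivAt y h
  have e : ∀ y : Euc d, ev (MvPolynomial.C (R ^ 2) - r2 d) y = R ^ 2 - ‖y‖ ^ 2 := by
    intro y; simp only [ev_sub, ev_C, ev_r2]
  simp only [Function.comp_def, e] at this
  exact this

lemma fderiv_wt_sq (R : ℝ) (y : Euc d) (i : Fin d) :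
    fderiv ℝ (fun y : Euc d => wt R y ^ 2) y (EuclideanSpace.single i 1) =
      wt R y * (-4 * y i) := by
  rw [(wt_sq_hasFDerivAt R y).fderiv, smul_apply, fderiv_ev, map_sub,
    MvPolynomial.pderiv_C, pderiv_r2]
  have : (2 : MvPolynomial (Fin d) ℝ) = MvPolynomial.C 2 := (map_ofNat _ 2).symm
  rw [this]
  simp only [ev_sub, ev_zero, ev_mul, ev_C, ev_X, smul_eq_mul]
  ring

/-- Orthogonality of harmonic homogeneous polynomials of different degrees. -/
lemma ortho {R : ℝ} (hR : 0 ≤ R) {p q : MvPolynomial (Fin d) ℝ} {j k : ℕ}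
    (hp : lap p = 0) (hq : lap q = 0) (hpj : p.IsHomogeneous j) (hqk : q.IsHomogeneous k)
    (hjk : j ≠ k) : ∫ y : Euc d, wt R y * (ev p y * ev q y) = 0 := by
  set G : Fin d → MvPolynomial (Fin d) ℝ := fun i =>
    p * MvPolynomial.pderiv i q - q * MvPolynomial.pderiv i p with hG
  have hcW : Continuous fun y : Euc d => wt R y ^ 2 := (wt_continuous R).pow 2
  have hi : ∀ i, ∫ y : Euc d, wt R y * (wt R y * ev (MvPolynomial.pderiv i (G i)) y) =
      ∫ y : Euc d, wt R y * (4 * y i * ev (G i) y) := by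
    intro i
    have h1 := integral_mul_fderiv_eq_neg_fderiv_mul_of_integrable (μ := volume)
      (f := fun y : Euc d => wt R y ^ 2) (g := ev (G i)) (v := EuclideanSpace.single i 1) ?_ ?_ ?_ ?_ ?_
    · simp only [fderiv_wt_sq, fderiv_ev] at h1
      rw [← integral_neg] at h1
      have e1 : ∀ y : Euc d, wt R y * (wt R y * ev (MvPolynomial.pderiv i (G i)) y) =
          wt R y ^ 2 * ev (MvPolynomial.pderiv i (G i)) y := fun y => by ring
      have e2 : ∀ y : Euc d, wt R y * (4 * y i * ev (G i) y) =
          -(wt R y * (-4 * y i) * ev (G i) y) := fun y => by ring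
      simp only [e1, e2]
      exact h1
    · simp only [fderiv_wt_sq, mul_assoc]
      exact wt_mul_integrable hR (continuous_const.mul (Continuous.mul (by fun_prop)
        (ev_continuous _)))
    · simp only [fderiv_ev, pow_two, mul_assoc]
      exact wt_mul_integrable hR ((wt_continuous R).mul (ev_continuous _))
    · simp only [pow_two, mul_assoc]
      exact wt_mul_integrable hR ((wt_continuous R).mul (ev_continuous _))
    · intro x _; exact (wt_sq_hasFDerivAt R x).differentiableAt
    · intro x _; exact ev_differentiable _ x
  have hsum : ∑ i, MvPolynomial.pderiv i (G i) = 0 := by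
    have : ∀ i, MvPolynomial.pderiv i (G i) =
        p * MvPolynomial.pderiv i (MvPolynomial.pderiv i q) -
          q * MvPolynomial.pderiv i (MvPolynomial.pderiv i p) := by
      intro i
      simp only [hG, map_sub, MvPolynomial.pderiv_mul]
      ring
    simp only [this, Finset.sum_sub_distrib, ← Finset.mul_sum]
    unfold lap at hp hq
    rw [hp, hq]; simp
  have hEp := hpj.sum_X_mul_pderiv
  have hEq := hqk.sum_X_mul_pderiv
  have heul : ∀ y : Euc d, ∑ i, y i * ev (G i) y = ((k : ℝ) - j) * (ev p y * ev q y) := by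
    intro y
    have e1 := congrArg (fun q => ev q y) hEp
    have e2 := congrArg (fun q => ev q y) hEq
    simp only [ev_sum, ev_mul, ev_X, nsmul_eq_mul] at e1 e2
    have c : ∀ m : ℕ, ev ((m : MvPolynomial (Fin d) ℝ)) y = m := by
      intro m; simp [ev]
    rw [c] at e1 e2
    have : ∑ i, y i * ev (G i) y = ev p y * ∑ i, y i * ev (MvPolynomial.pderiv i q) y
        - ev q y * ∑ i, y i * ev (MvPolynomial.pderiv i p) y := by
      rw [Finset.mul_sum, Finset.mul_sum, ← Finset.sum_sub_distrib]
      refine Finset.sum_congr rfl fun i _ => ?_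
      simp only [hG, ev_sub, ev_mul]; ring
    rw [this, e1, e2]; ring
  have h2 : ∑ i, ∫ y : Euc d, wt R y * (wt R y * ev (MvPolynomial.pderiv i (G i)) y) =
      ∑ i, ∫ y : Euc d, wt R y * (4 * y i * ev (G i) y) := Finset.sum_congr rfl fun i _ => hi i
  have j1 : ∀ i ∈ Finset.univ, Integrable
      (fun y : Euc d => wt R y * (wt R y * ev (MvPolynomial.pderiv i (G i)) y)) := fun i _ =>
    wt_mul_integrable hR ((wt_continuous R).mul (ev_continuous _))
  have j2 : ∀ i ∈ Finset.univ, Integrable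
      (fun y : Euc d => wt R y * (4 * y i * ev (G i) y)) := fun i _ =>
    wt_mul_integrable hR (Continuous.mul (by fun_prop) (ev_continuous _))
  rw [← integral_finsetSum _ j1, ← integral_finsetSum _ j2] at h2
  have h3 : ∀ y : Euc d, ∑ i, wt R y * (wt R y * ev (MvPolynomial.pderiv i (G i)) y) = 0 := by
    intro y
    rw [← Finset.mul_sum, ← Finset.mul_sum, ← ev_sum, hsum]; simp
  have h4 : ∀ y : Euc d, ∑ i, wt R y * (4 * y i * ev (G i) y) =
      (4 * ((k : ℝ) - j)) * (wt R y * (ev p y * ev q y)) := by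
    intro y
    rw [← Finset.mul_sum]
    simp only [mul_assoc]
    rw [← Finset.mul_sum, heul]; ring
  simp only [h3, h4] at h2
  rw [integral_zero, integral_const_mul] at h2
  have h5 : (4 * ((k : ℝ) - j)) ≠ 0 := by
    have : (k : ℝ) ≠ j := by exact_mod_cast hjk.symm
    exact mul_ne_zero four_ne_zero (sub_ne_zero.2 this)
  exact (mul_eq_zero.1 h2.symm).resolve_left h5

/-- Homogeneous components. -/
abbrev hc (k : ℕ) (p : MvPolynomial (Fin d) ℝ) : MvPolynomial (Fin d) ℝ :=
  MvPolynomial.homogeneousComponent k p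

lemma pderiv_hc_succ (k : ℕ) (i : Fin d) (p : MvPolynomial (Fin d) ℝ) :
    MvPolynomial.pderiv i (hc (k + 1) p) = hc k (MvPolynomial.pderiv i p) := by
  ext m
  rw [MvPolynomial.coeff_pderiv, MvPolynomial.coeff_homogeneousComponent,
    MvPolynomial.coeff_homogeneousComponent, MvPolynomial.coeff_pderiv]
  simp only [map_add, Finsupp.degree_single, add_left_inj]
  split_ifs <;> simp

lemma pderiv_hc_zero (i : Fin d) (p : MvPolynomial (Fin d) ℝ) :
    MvPolynomial.pderiv i (hc 0 p) = 0 := by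
  simp [hc]

lemma lap_hc {p : MvPolynomial (Fin d) ℝ} (hp : lap p = 0) (k : ℕ) : lap (hc k p) = 0 := by
  rcases k with _ | _ | k
  · exact Finset.sum_eq_zero fun i _ => by rw [pderiv_hc_zero]; simp
  · exact Finset.sum_eq_zero fun i _ => by rw [pderiv_hc_succ, pderiv_hc_zero]
  · have : lap (hc (k + 2) p) = hc k (lap p) := by
      unfold lap hc
      rw [map_sum]
      exact Finset.sum_congr rfl fun i _ => by rw [← hc, ← hc, pderiv_hc_succ, pderiv_hc_succ]
    rw [this, hp]; simp

lemma integral_hc {R : ℝ} (hR : 0 ≤ R) {p q : MvPolynomial (Fin d) ℝ} {k : ℕ}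
    (hp : lap p = 0) (hq : lap q = 0) (hqk : q.IsHomogeneous k) :
    ∫ y : Euc d, wt R y * (ev q y * ev p y) = ∫ y : Euc d, wt R y * (ev q y * ev (hc k p) y) := by
  set m := p.totalDegree + k + 1
  have hsum : ∑ j ∈ Finset.range m, hc j p = p := by
    have h0 := MvPolynomial.sum_homogeneousComponent p
    conv_rhs => rw [← h0]
    symm
    refine Finset.sum_subset (Finset.range_mono (by omega)) fun j _ hj => ?_
    refine MvPolynomial.homogeneousComponent_eq_zero _ _ ?_
    simp at hj; omega
  have h1 : ∀ y : Euc d, wt R y * (ev q y * ev p y) =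
      ∑ j ∈ Finset.range m, wt R y * (ev q y * ev (hc j p) y) := by
    intro y
    conv_lhs => rw [← hsum]
    rw [ev_sum, Finset.mul_sum, Finset.mul_sum]
  simp only [h1]
  have j1 : ∀ j ∈ Finset.range m, Integrable
      (fun y : Euc d => wt R y * (ev q y * ev (hc j p) y)) := fun j _ =>
    wt_mul_integrable hR ((ev_continuous _).mul (ev_continuous _))
  rw [integral_finsetSum _ j1]
  refine Finset.sum_eq_single_of_mem k (by simp [m]) fun j _ hj => ?_
  exact ortho hR hq (lap_hc hp j) hqk (MvPolynomial.homogeneousComponent_isHomogeneous j p) hj.symm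

/-- Bessel inequality. -/
lemma bessel {R : ℝ} (hR : 0 ≤ R) {p : MvPolynomial (Fin d) ℝ} (hp : lap p = 0) (k : ℕ) :
    ∫ y : Euc d, wt R y * (ev (hc k p) y) ^ 2 ≤ ∫ y : Euc d, wt R y * (ev p y) ^ 2 := by
  have h1 := integral_hc hR hp (lap_hc hp k) (MvPolynomial.homogeneousComponent_isHomogeneous k p)
  have h2 : 0 ≤ ∫ y : Euc d, wt R y * (ev p y - ev (hc k p) y) ^ 2 :=
    integral_nonneg fun y => mul_nonneg (wt_nonneg R y) (sq_nonneg _)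
  have i1 : Integrable (fun y : Euc d => wt R y * (ev p y) ^ 2) :=
    wt_mul_integrable hR ((ev_continuous p).pow 2)
  have i2 : Integrable (fun y : Euc d => wt R y * (ev (hc k p) y) ^ 2) :=
    wt_mul_integrable hR ((ev_continuous (hc k p)).pow 2)
  have i3 : Integrable (fun y : Euc d => wt R y * (ev (hc k p) y * ev p y)) :=
    wt_mul_integrable hR ((ev_continuous (hc k p)).mul (ev_continuous p))
  have h3 : ∫ y : Euc d, wt R y * (ev p y - ev (hc k p) y) ^ 2 =
      (∫ y : Euc d, wt R y * (ev p y) ^ 2) - 2 * (∫ y : Euc d, wt R y * (ev (hc k p) y * ev p y))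
        + ∫ y : Euc d, wt R y * (ev (hc k p) y) ^ 2 := by
    have e : ∀ y : Euc d, wt R y * (ev p y - ev (hc k p) y) ^ 2 = (wt R y * (ev p y) ^ 2
        - 2 * (wt R y * (ev (hc k p) y * ev p y))) + wt R y * (ev (hc k p) y) ^ 2 :=
      fun y => by ring
    have i4 : Integrable (fun y : Euc d => wt R y * (ev p y) ^ 2
        - 2 * (wt R y * (ev (hc k p) y * ev p y))) := i1.sub (i3.const_mul 2)
    simp only [e]
    rw [integral_add i4 i2, integral_sub i1 (i3.const_mul 2), integral_const_mul]
  have h4 : ∫ y : Euc d, wt R y * (ev (hc k p) y * ev (hc k p) y) =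
    ∫ y : Euc d, wt R y * (ev (hc k p) y) ^ 2 := by
    congr 1; ext y; ring
  linarith

/-- Translation of polynomials. -/
def shift (a : Euc d) : MvPolynomial (Fin d) ℝ →ₐ[ℝ] MvPolynomial (Fin d) ℝ :=
  MvPolynomial.aeval fun i => MvPolynomial.X i + MvPolynomial.C (a i)

lemma shift_X (a : Euc d) (i : Fin d) :
    shift a (MvPolynomial.X i) = MvPolynomial.X i + MvPolynomial.C (a i) := by
  simp [shift]

lemma ev_shift (a : Euc d) (p : MvPolynomial (Fin d) ℝ) (y : Euc d) :
    ev (shift a p) y = ev p (y + a) := by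
  induction p using MvPolynomial.induction_on with
  | C a => simp [shift]
  | add p q hp hq => simp [hp, hq]
  | mul_X p i hp => rw [map_mul, ev_mul, hp, shift_X]; simp

lemma pderiv_shift (a : Euc d) (p : MvPolynomial (Fin d) ℝ) (i : Fin d) :
    MvPolynomial.pderiv i (shift a p) = shift a (MvPolynomial.pderiv i p) := by
  induction p using MvPolynomial.induction_on with
  | C a => simp [shift]
  | add p q hp hq => simp [hp, hq]
  | mul_X p j hp =>
    rw [map_mul, MvPolynomial.pderiv_mul, MvPolynomial.pderiv_mul, hp, map_add (shift a),
      map_mul (shift a), map_mul (shift a), shift_X]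
    by_cases hij : j = i
    · subst hij; simp
    · simp [MvPolynomial.pderiv_X_of_ne hij]

lemma lap_shift (a : Euc d) (p : MvPolynomial (Fin d) ℝ) : lap (shift a p) = shift a (lap p) := by
  unfold lap
  rw [map_sum]
  exact Finset.sum_congr rfl fun i _ => by rw [pderiv_shift, pderiv_shift]

/-- Weighted mean value property. -/
lemma mvp {s : ℝ} (hs : 0 ≤ s) {p : MvPolynomial (Fin d) ℝ} (hp : lap p = 0) (a : Euc d) :
    ev p a * ∫ y : Euc d, wt s y = ∫ z : Euc d, wt s (z - a) * ev p z := by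
  have h1 := integral_hc hs (p := shift a p) (q := 1) (k := 0) (by rw [lap_shift, hp, map_zero])
    (by simp [lap]) (MvPolynomial.isHomogeneous_one _ _)
  have h2 : ∀ y, ev (hc 0 (shift a p)) y = ev p a := by
    intro y
    have : ev (shift a p) 0 = ev p a := by rw [ev_shift, zero_add]
    rw [← this]
    simp only [hc, MvPolynomial.homogeneousComponent_zero, ev_C]
    simp only [ev]
    have : (fun i => (0 : Euc d) i) = 0 := by ext i; simp
    rw [this, MvPolynomial.eval_zero]
    rfl
  simp only [ev_one, one_mul, h2] at h1
  rw [integral_mul_const] at h1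
  rw [mul_comm, ← h1]
  rw [← integral_sub_right_eq_self (fun y => wt s y * ev (shift a p) y) a]
  congr 1; ext z
  rw [ev_shift, sub_add_cancel]

end MeanValue

/-! ### Interior bounds -/

section Bounds
variable {d : ℕ}

lemma wt_integrable {R : ℝ} (hR : 0 ≤ R) : Integrable (fun y : Euc d => wt R y) := by
  simpa using wt_mul_integrable (d := d) hR (f := fun _ => 1) continuous_const

lemma wt_integral_pos {R : ℝ} (hR : 0 < R) : 0 < ∫ y : Euc d, wt R y := by
  refine (wt_continuous R).integral_pos_of_hasCompactSupport_nonneg_nonzero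
    (wt_hasCompactSupport hR.le) (fun y => wt_nonneg R y) (x := 0) ?_
  have : wt R (0 : Euc d) = R ^ 2 := by
    unfold wt; rw [norm_zero, max_eq_left] <;> simp [sq_nonneg]
  rw [this]; positivity

lemma wt_shift_zero {a z : Euc d} (ha : ‖a‖ ≤ 3 / 8) (hz : 7 / 16 ≤ ‖z‖) :
    wt (1 / 16) (z - a) = 0 := by
  refine wt_eq_zero (by norm_num) ?_
  have := norm_sub_norm_le z a
  linarith

lemma wt_half_ge {z : Euc d} (hz : ‖z‖ < 7 / 16) : 15 / 256 ≤ wt (1 / 2) z := by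
  unfold wt
  refine le_max_of_le_left ?_
  nlinarith [norm_nonneg z]

lemma wt_le {R : ℝ} (y : Euc d) : wt R y ≤ R ^ 2 := by
  unfold wt
  refine max_le ?_ (sq_nonneg _)
  nlinarith [norm_nonneg y]

lemma wt_shift_le {a z : Euc d} (ha : ‖a‖ ≤ 3 / 8) : wt (1 / 16) (z - a) ≤ wt (1 / 2) z := by
  rcases le_or_gt (7 / 16) ‖z‖ with hz | hz
  · rw [wt_shift_zero ha hz]; exact wt_nonneg _ _
  · have := wt_half_ge hz
    have := wt_le (R := 1 / 16) (z - a)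
    norm_num at this ⊢
    linarith

lemma wt_eq_min {R : ℝ} (hR : 0 ≤ R) (y : Euc d) : wt R y = R ^ 2 - min ‖y‖ R ^ 2 := by
  rcases le_total ‖y‖ R with h | h
  · rw [min_eq_left h]
    unfold wt
    rw [max_eq_left]
    nlinarith [norm_nonneg y]
  · rw [min_eq_right h, wt_eq_zero hR h]; ring

lemma wt_lip {R : ℝ} (hR : 0 ≤ R) (u v : Euc d) : |wt R u - wt R v| ≤ 2 * R * ‖u - v‖ := by
  rw [wt_eq_min hR, wt_eq_min hR]
  have e : R ^ 2 - min ‖u‖ R ^ 2 - (R ^ 2 - min ‖v‖ R ^ 2) =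
    (min ‖u‖ R + min ‖v‖ R) * (min ‖v‖ R - min ‖u‖ R) := by ring
  rw [e, abs_mul]
  have h1 : |min ‖v‖ R - min ‖u‖ R| ≤ ‖u - v‖ := by
    refine (abs_min_sub_min_le_max _ _ _ _).trans ?_
    rw [sub_self, abs_zero, max_eq_left (abs_nonneg _), norm_sub_rev]
    exact abs_norm_sub_norm_le v u
  have h2 : |min ‖u‖ R + min ‖v‖ R| ≤ 2 * R := by
    rw [abs_of_nonneg (add_nonneg (le_min (norm_nonneg _) hR) (le_min (norm_nonneg _) hR))]
    have := min_le_right ‖u‖ R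
    have := min_le_right ‖v‖ R
    linarith
  exact mul_le_mul h2 h1 (abs_nonneg _) (by positivity)

lemma wt_shift_lip {a b z : Euc d} (ha : ‖a‖ ≤ 3 / 8) (hb : ‖b‖ ≤ 3 / 8) :
    |wt (1 / 16) (z - a) - wt (1 / 16) (z - b)| ≤ 3 * ‖a - b‖ * wt (1 / 2) z := by
  rcases le_or_gt (7 / 16) ‖z‖ with hz | hz
  · rw [wt_shift_zero ha hz, wt_shift_zero hb hz]
    simpa using mul_nonneg (mul_nonneg (by norm_num : (0:ℝ) ≤ 3) (norm_nonneg (a - b)))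
      (wt_nonneg _ z)
  · have h1 := wt_half_ge hz
    have h2 := wt_lip (R := 1 / 16) (by norm_num) (z - a) (z - b)
    have e : z - a - (z - b) = b - a := by abel
    rw [e, norm_sub_rev] at h2
    have h3 := mul_le_mul_of_nonneg_left h1 (norm_nonneg (a - b))
    linarith [norm_nonneg (a - b)]

lemma abs_integral_le {M C : ℝ} (hC : 0 ≤ C) {w : Euc d → ℝ} {p : MvPolynomial (Fin d) ℝ}
    (hM : ∫ y : Euc d, wt (1 / 2) y * (ev p y) ^ 2 ≤ M)
    (hw : ∀ z, |w z| ≤ C * wt (1 / 2) z) :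
    |∫ z, w z * ev p z| ≤ C * ((∫ y : Euc d, wt (1 / 2) y) + M) := by
  have i2 : Integrable (fun y : Euc d => wt (1 / 2) y * (ev p y) ^ 2) :=
    wt_mul_integrable (by norm_num) ((ev_continuous p).pow 2)
  have i1 : Integrable (fun y : Euc d => wt (1 / 2) y) := wt_integrable (by norm_num)
  have h := norm_integral_le_of_norm_le (f := fun z => w z * ev p z)
    (g := fun z => C * (wt (1 / 2) z + wt (1 / 2) z * (ev p z) ^ 2)) ((i1.add i2).const_mul C)
    (Eventually.of_forall fun z => ?_)
  · rw [Real.norm_eq_abs, integral_const_mul, integral_add i1 i2] at h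
    refine h.trans (mul_le_mul_of_nonneg_left ?_ hC)
    linarith
  · rw [Real.norm_eq_abs, abs_mul]
    have h1 : |ev p z| ≤ 1 + ev p z ^ 2 := by
      rw [← sq_abs]; nlinarith [sq_nonneg (|ev p z| - 1), abs_nonneg (ev p z)]
    calc |w z| * |ev p z| ≤ (C * wt (1 / 2) z) * (1 + ev p z ^ 2) :=
          mul_le_mul (hw z) h1 (abs_nonneg _) (mul_nonneg hC (wt_nonneg _ _))
      _ = _ := by ring

/-- The constant in the interior estimates. -/
def KK (d : ℕ) (M : ℝ) : ℝ :=
  ((∫ y : Euc d, wt (1 / 2) y) + M) / ∫ y : Euc d, wt (1 / 16) y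

lemma bound_sup {M : ℝ} {p : MvPolynomial (Fin d) ℝ} (hp : lap p = 0)
    (hM : ∫ y : Euc d, wt (1 / 2) y * (ev p y) ^ 2 ≤ M) {a : Euc d} (ha : ‖a‖ ≤ 3 / 8) :
    |ev p a| ≤ KK d M := by
  have hI : 0 < ∫ y : Euc d, wt (1 / 16) y := wt_integral_pos (by norm_num)
  unfold KK
  rw [le_div_iff₀ hI, ← abs_of_pos hI, ← abs_mul, mvp (by norm_num) hp]
  have := abs_integral_le (C := 1) (by norm_num) (w := fun z => wt (1 / 16) (z - a)) hM
    (fun z => by rw [abs_of_nonneg (wt_nonneg _ _), one_mul]; exact wt_shift_le ha)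
  rwa [one_mul] at this

lemma bound_lip {M : ℝ} {p : MvPolynomial (Fin d) ℝ} (hp : lap p = 0)
    (hM : ∫ y : Euc d, wt (1 / 2) y * (ev p y) ^ 2 ≤ M) {a b : Euc d} (ha : ‖a‖ ≤ 3 / 8)
    (hb : ‖b‖ ≤ 3 / 8) :
    |ev p a - ev p b| ≤ 3 * ‖a - b‖ * KK d M := by
  have hI : 0 < ∫ y : Euc d, wt (1 / 16) y := wt_integral_pos (by norm_num)
  unfold KK
  rw [← mul_div_assoc, le_div_iff₀ hI]
  conv_lhs => rw [← abs_of_pos hI]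
  rw [← abs_mul, sub_mul, mvp (by norm_num) hp, mvp (by norm_num) hp]
  have ii : ∀ a : Euc d, Integrable (fun z => wt (1 / 16) (z - a) * ev p z) := by
    intro a
    have := (wt_mul_integrable (R := 1 / 16) (by norm_num) (ev_continuous (shift a p))).comp_sub_right a
    simpa only [ev_shift, sub_add_cancel] using this
  rw [← integral_sub (ii a) (ii b)]
  simp only [← sub_mul]
  exact abs_integral_le (C := 3 * ‖a - b‖) (by positivity)
    (w := fun z => wt (1 / 16) (z - a) - wt (1 / 16) (z - b)) hM
    (fun z => wt_shift_lip ha hb)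

/-- Interior bound for homogeneous components. -/
lemma bound_hc {M : ℝ} {p : MvPolynomial (Fin d) ℝ} (hp : lap p = 0)
    (hM : ∫ y : Euc d, wt (1 / 2) y * (ev p y) ^ 2 ≤ M) (k : ℕ) {a : Euc d} (ha : ‖a‖ ≤ 3 / 8) :
    |ev (hc k p) a| ≤ KK d M :=
  bound_sup (lap_hc hp k) ((bessel (by norm_num) hp k).trans hM) ha

lemma ev_homog {p : MvPolynomial (Fin d) ℝ} {k : ℕ} (hp : p.IsHomogeneous k) (t : ℝ) (x : Euc d) :
    ev p (t • x) = t ^ k * ev p x := by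
  simp only [ev, MvPolynomial.eval_eq']
  rw [Finset.mul_sum]
  refine Finset.sum_congr rfl fun m hm => ?_
  have hdeg : ∑ i, m i = k := by
    have := hp (MvPolynomial.mem_support_iff.1 hm)
    rw [← this]
    simp [Finsupp.weight_apply, Finsupp.sum_fintype]
  have : ∀ i, (t • x) i ^ m i = t ^ m i * x i ^ m i := fun i => by
    simp [mul_pow]
  simp only [this]
  rw [Finset.prod_mul_distrib, Finset.prod_pow_eq_pow_sum, hdeg]
  ring

lemma ev_hc_smul (p : MvPolynomial (Fin d) ℝ) (k : ℕ) (t : ℝ) (x : Euc d) :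
    ev (hc k p) (t • x) = t ^ k * ev (hc k p) x :=
  ev_homog (MvPolynomial.homogeneousComponent_isHomogeneous k p) t x

lemma bound_hc_quarter {M : ℝ} {p : MvPolynomial (Fin d) ℝ} (hp : lap p = 0)
    (hM : ∫ y : Euc d, wt (1 / 2) y * (ev p y) ^ 2 ≤ M) (k : ℕ) {a : Euc d} (ha : ‖a‖ ≤ 1 / 4) :
    |ev (hc k p) a| ≤ (2 / 3) ^ k * KK d M := by
  have h1 : a = (2 / 3 : ℝ) • ((3 / 2 : ℝ) • a) := by rw [smul_smul]; norm_num
  rw [h1, ev_hc_smul, abs_mul, abs_of_nonneg (by positivity)]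
  refine mul_le_mul_of_nonneg_left (bound_hc hp hM k ?_) (by positivity)
  rw [norm_smul]; norm_num; linarith

lemma ev_hasSum (p : MvPolynomial (Fin d) ℝ) (x : Euc d) :
    HasSum (fun k => ev (hc k p) x) (ev p x) := by
  have h0 := MvPolynomial.sum_homogeneousComponent p
  have h1 : ev p x = ∑ k ∈ Finset.range (p.totalDegree + 1), ev (hc k p) x := by
    rw [← ev_sum, h0]
  rw [h1]
  refine hasSum_sum_of_ne_finset_zero fun k hk => ?_
  have : hc k p = 0 := by
    refine MvPolynomial.homogeneousComponent_eq_zero _ _ ?_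
    simp at hk; omega
  rw [this, ev_zero]

end Bounds

/-! ### Uniqueness for the Cauchy problem on the flat face -/

section Unique
variable {n : ℕ}

lemma hasDerivAt_ev_line (p : MvPolynomial (Fin (n + 1)) ℝ) (x : Euc (n + 1)) (i : Fin (n + 1))
    (t : ℝ) : HasDerivAt (fun t : ℝ => ev p (x + t • EuclideanSpace.single i 1))
      (ev (MvPolynomial.pderiv i p) (x + t • EuclideanSpace.single i 1)) t := by
  have h1 : HasDerivAt (fun t : ℝ => x + t • (EuclideanSpace.single i 1 : Euc (n + 1)))
      (EuclideanSpace.single i 1) t := by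
    simpa using ((hasDerivAt_id t).smul_const (EuclideanSpace.single i 1 : Euc (n + 1))).const_add x
  have h2 := (ev_differentiable p (x + t • EuclideanSpace.single i 1)).hasFDerivAt.comp_hasDerivAt t h1
  rw [fderiv_ev] at h2
  exact h2

lemma tangential_zero {p : MvPolynomial (Fin (n + 1)) ℝ}
    (hp : ∀ x : Euc (n + 1), lastc x = 0 → ev p x = 0) {i : Fin (n + 1)} (hi : i ≠ Fin.last n)
    (x : Euc (n + 1)) (hx : lastc x = 0) : ev (MvPolynomial.pderiv i p) x = 0 := by
  have h1 := hasDerivAt_ev_line p x i 0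
  have h2 : (fun t : ℝ => ev p (x + t • EuclideanSpace.single i 1)) = fun _ => 0 := by
    ext t
    refine hp _ ?_
    unfold lastc at hx ⊢
    simp [hx, hi.symm]
  rw [h2] at h1
  have := h1.unique (hasDerivAt_const 0 0)
  simpa using this

lemma cauchy_unique (k : ℕ) : ∀ {f : MvPolynomial (Fin (n + 1)) ℝ}, f.IsHomogeneous k →
    lap f = 0 → (∀ x : Euc (n + 1), lastc x = 0 → ev f x = 0) →
    (∀ x : Euc (n + 1), lastc x = 0 → ev (MvPolynomial.pderiv (Fin.last n) f) x = 0) → f = 0 := by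
  induction k with
  | zero =>
    intro f hf _ h0 _
    have : f.totalDegree = 0 := hf.totalDegree_le.antisymm (Nat.zero_le _) 
    rw [MvPolynomial.totalDegree_eq_zero_iff_eq_C] at this
    have h := h0 0 (by simp [lastc])
    rw [this, ev_C] at h
    rw [this, h, map_zero]
  | succ k ih =>
    intro f hf hl h0 h1
    have hD : MvPolynomial.pderiv (Fin.last n) f = 0 := by
      refine ih (by simpa using hf.pderiv (i := Fin.last n)) ?_ h1 ?_
      · rw [lap_pderiv, hl, map_zero]
      · intro x hx
        have h2 : ev (lap f) x = 0 := by rw [hl, ev_zero]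
        unfold lap at h2
        rw [ev_sum, Fin.sum_univ_castSucc, Finset.sum_eq_zero, zero_add] at h2
        · exact h2
        · intro i _
          have hi : i.castSucc ≠ Fin.last n := (Fin.castSucc_lt_last i).ne
          exact tangential_zero (fun y hy => tangential_zero h0 hi y hy) hi x hx
    refine ev_injective_of_ball (r := 1) one_pos fun x _ => ?_
    have hc : ∀ a b : ℝ, ev f (x + a • EuclideanSpace.single (Fin.last n) 1) =
        ev f (x + b • EuclideanSpace.single (Fin.last n) 1) := by
      refine is_const_of_deriv_eq_zero (f := fun t : ℝ => ev f (x + t • EuclideanSpace.single (Fin.last n) 1)) ?_ ?_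
      · exact fun t => (hasDerivAt_ev_line f x _ t).differentiableAt
      · intro t
        rw [(hasDerivAt_ev_line f x _ t).deriv, hD, ev_zero]
    have := hc 0 (-lastc x)
    rw [zero_smul, add_zero] at this
    rw [this]
    exact h0 _ (by simp [lastc])

end Unique

/-! ### Compactness -/

section Compactness
variable {n : ℕ}

lemma polyRefl_homog {p : MvPolynomial (Fin (n + 1)) ℝ} {k : ℕ} (hp : p.IsHomogeneous k) :
    (polyRefl n p).IsHomogeneous k := by
  have := hp.aeval (fun i => polyRefl n (MvPolynomial.X i)) (n := 1) ?_
  · have e : MvPolynomial.aeval (fun i => polyRefl n (MvPolynomial.X i)) p = polyRefl n p := by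
      conv_rhs => rw [MvPolynomial.aeval_unique (polyRefl n)]
      rfl
    rw [e, one_mul] at this
    exact this
  · intro i
    simp only [polyRefl, MvPolynomial.aeval_X]
    exact MvPolynomial.isHomogeneous_C_mul_X _ _

lemma polyRefl_hc {p : MvPolynomial (Fin (n + 1)) ℝ} (hp : polyRefl n p = p) (k : ℕ) :
    polyRefl n (hc k p) = hc k p := by
  have h0 := MvPolynomial.sum_homogeneousComponent p
  have h1 : ∀ j, hc k (polyRefl n (hc j p)) = if j = k then polyRefl n (hc j p) else 0 := by
    intro j
    have := MvPolynomial.homogeneousComponent_of_mem (m := k) (n := j)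
      ((MvPolynomial.mem_homogeneousSubmodule _ _).2
        (polyRefl_homog (MvPolynomial.homogeneousComponent_isHomogeneous j p)))
    rw [hc, this]
    simp [eq_comm]
  have h2 : hc k p = ∑ j ∈ Finset.range (p.totalDegree + 1), hc k (polyRefl n (hc j p)) := by
    conv_lhs => rw [← hp, ← h0]
    unfold hc
    rw [map_sum, map_sum]
  conv_rhs => rw [h2]
  simp only [h1]
  rw [Finset.sum_ite_eq']
  split_ifs with h
  · rfl
  · have : hc k p = 0 := by
      refine MvPolynomial.homogeneousComponent_eq_zero _ _ ?_
      simp at h; omega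
    rw [this, map_zero]

/-- Even harmonic homogeneous polynomials. -/
def WW (n k : ℕ) : Submodule ℝ (MvPolynomial (Fin (n + 1)) ℝ) where
  carrier := {p | p.IsHomogeneous k ∧ lap p = 0 ∧ polyRefl n p = p}
  add_mem' := by
    rintro p q ⟨a1, a2, a3⟩ ⟨b1, b2, b3⟩
    exact ⟨a1.add b1, by rw [lap_add, a2, b2, add_zero], by rw [map_add, a3, b3]⟩
  zero_mem' := ⟨MvPolynomial.isHomogeneous_zero _ _ _, by simp [lap], map_zero _⟩
  smul_mem' := by
    rintro c p ⟨a1, a2, a3⟩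
    refine ⟨?_, by rw [lap_smul, a2, smul_zero], by rw [map_smul, a3]⟩
    exact (MvPolynomial.homogeneousSubmodule (Fin (n + 1)) ℝ k).smul_mem c a1

instance WW_fin (n k : ℕ) : FiniteDimensional ℝ (WW n k) := by
  have : FiniteDimensional ℝ (MvPolynomial.homogeneousSubmodule (Fin (n + 1)) ℝ k) :=
    Module.Finite.iff_fg.2 (MvPolynomial.homogeneousSubmodule_fg _ _ _)
  exact Submodule.finiteDimensional_of_le (S₂ := MvPolynomial.homogeneousSubmodule (Fin (n + 1)) ℝ k)
    (fun p (hp : p ∈ WW n k) => (MvPolynomial.mem_homogeneousSubmodule _ _).2 hp.1)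

/-- Evaluation as a linear map. -/
def evL (d : ℕ) : MvPolynomial (Fin d) ℝ →ₗ[ℝ] (Euc d → ℝ) where
  toFun p := ev p
  map_add' p q := by ext x; simp
  map_smul' c p := by ext x; simp

lemma WW_closed (n k : ℕ) : IsClosed ((WW n k).map (evL (n + 1)) : Set (Euc (n + 1) → ℝ)) :=
  Submodule.closed_of_finiteDimensional _

lemma bounded_lim (U : Ultrafilter ℕ) {u : ℕ → ℝ} {C : ℝ} (h : ∀ j, |u j| ≤ C) :
    ∃ l, Tendsto u U (𝓝 l) := by
  obtain ⟨l, _, hl⟩ := (isCompact_Icc (a := -C) (b := C)).ultrafilter_le_nhds (U.map u) (by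
    rw [Ultrafilter.coe_map, le_principal_iff, Filter.mem_map]
    exact Filter.mem_of_superset Filter.univ_mem (show univ ⊆ u ⁻¹' Icc (-C) C from fun j _ => abs_le.1 (h j)))
  exact ⟨l, hl⟩

lemma lim_poly {M : ℝ} {h : ℕ → MvPolynomial (Fin (n + 1)) ℝ} (h1 : ∀ j, lap (h j) = 0)
    (h2 : ∀ j, polyRefl n (h j) = h j)
    (h3 : ∀ j, ∫ y : Euc (n + 1), wt (1 / 2) y * (ev (h j) y) ^ 2 ≤ M) (U : Ultrafilter ℕ) :
    ∃ q : ℕ → MvPolynomial (Fin (n + 1)) ℝ, (∀ k, q k ∈ WW n k) ∧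
      ∀ k x, Tendsto (fun j => ev (hc k (h j)) x) U (𝓝 (ev (q k) x)) := by
  have hb : ∀ k x, ∃ l, Tendsto (fun j => ev (hc k (h j)) x) U (𝓝 l) := by
    intro k x
    set t : ℝ := 3 / 8 / (‖x‖ + 1) with ht
    have hx : 0 < ‖x‖ + 1 := by positivity
    have ht0 : 0 < t := by positivity
    have htx : ‖t • x‖ ≤ 3 / 8 := by
      rw [norm_smul, Real.norm_eq_abs, abs_of_pos ht0, ht, div_mul_eq_mul_div, div_le_iff₀ hx]
      linarith
    refine bounded_lim U (C := (t ^ k)⁻¹ * KK (n + 1) M) fun j => ?_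
    have := bound_hc (h1 j) (h3 j) k htx
    rw [ev_hc_smul, abs_mul, abs_of_pos (by positivity)] at this
    rwa [inv_mul_eq_div, le_div_iff₀ (by positivity), mul_comm]
  choose G hG using hb
  have hmem : ∀ k, G k ∈ ((WW n k).map (evL (n + 1)) : Set (Euc (n + 1) → ℝ)) := by
    intro k
    refine (WW_closed n k).mem_of_tendsto (f := fun j => ev (hc k (h j))) (b := (U : Filter ℕ))
      (tendsto_pi_nhds.2 fun x => hG k x) (Eventually.of_forall fun j => ?_)
    exact ⟨hc k (h j), ⟨MvPolynomial.homogeneousComponent_isHomogeneous _ _, lap_hc (h1 j) k,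
      polyRefl_hc (h2 j) k⟩, rfl⟩
  choose q hq hq2 using hmem
  refine ⟨q, hq, fun k x => ?_⟩
  have : ev (q k) x = G k x := congrFun (hq2 k) x
  rw [this]; exact hG k x

lemma coeff_zero_of_sum {a : ℕ → ℝ} (h : ∀ t : ℝ, |t| < 1 → HasSum (fun k => t ^ k * a k) 0) :
    ∀ k, a k = 0 := by
  have h1 : HasFPowerSeriesAt (fun _ : ℝ => (0 : ℝ)) (FormalMultilinearSeries.ofScalars ℝ a) 0 := by
    rw [hasFPowerSeriesAt_iff]
    filter_upwards [Metric.ball_mem_nhds (0 : ℝ) one_pos] with t ht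
    simpa using h t (by simpa using ht)
  have h2 := HasFPowerSeriesAt.eq_zero h1
  intro k
  have := congrArg (fun p : FormalMultilinearSeries ℝ ℝ ℝ => p.coeff k) h2
  have h0 : (0 : FormalMultilinearSeries ℝ ℝ ℝ).coeff k = 0 := by
    simp [FormalMultilinearSeries.coeff]
  simp only [FormalMultilinearSeries.coeff_ofScalars, h0] at this
  exact this

/-- Quantitative non-vanishing on the flat face, by compactness. -/
lemma propP (M : ℝ) : ∃ δ : ℝ, 0 < δ ∧ ∀ h : MvPolynomial (Fin (n + 1)) ℝ, lap h = 0 →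
    polyRefl n h = h → ∫ y : Euc (n + 1), wt (1 / 2) y * (ev h y) ^ 2 ≤ M →
    (∃ x : Euc (n + 1), ‖x‖ ≤ 1 / 4 ∧ 1 / 2 ≤ |ev h x|) →
    ∃ x : Euc (n + 1), lastc x = 0 ∧ ‖x‖ < 1 / 8 ∧ ∀ y ∈ ball x δ, δ ≤ |ev h y| := by
  by_contra hcon
  push Not at hcon
  have hδ : ∀ j : ℕ, 0 < (1 : ℝ) / (j + 4) := fun j => by positivity
  choose h h1 h2 h3 hx hfail using fun j : ℕ => hcon (1 / ((j : ℝ) + 4)) (hδ j)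
  choose x hx1 hx2 using hx
  set K := KK (n + 1) M with hK
  have hK0 : 0 ≤ K := (abs_nonneg _).trans (bound_sup (h1 0) (h3 0) (a := 0) (by norm_num))
  set U : Ultrafilter ℕ := hyperfilter ℕ with hU
  have hUt : (U : Filter ℕ) ≤ atTop := Nat.hyperfilter_le_atTop
  have hδt : Tendsto (fun j : ℕ => (1 : ℝ) / (j + 4)) U (𝓝 0) := by
    refine Tendsto.mono_left ?_ hUt
    have := (tendsto_one_div_add_atTop_nhds_zero_nat (𝕜 := ℝ)).comp (tendsto_add_atTop_nat 3)
    refine this.congr fun j => ?_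
    simp only [Function.comp, Nat.cast_add, Nat.cast_ofNat]
    congr 1; ring
  obtain ⟨q, hqW, hq⟩ := lim_poly h1 h2 h3 U
  have hsmall : ∀ j : ℕ, (1 : ℝ) / (j + 4) ≤ 1 / 4 := fun j => by
    apply one_div_le_one_div_of_le <;> [norm_num; (have := Nat.cast_nonneg (α := ℝ) j; linarith)]
  have hgeo : Summable fun k : ℕ => (2 / 3 : ℝ) ^ k * K :=
    (summable_geometric_of_lt_one (by norm_num) (by norm_num)).mul_right K
  have hlim : ∀ z : Euc (n + 1), ‖z‖ ≤ 1 / 4 →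
      Tendsto (fun j => ev (h j) z) U (𝓝 (∑' k, ev (q k) z)) := by
    intro z hz
    have e : ∀ j, ev (h j) z = ∑' k, ev (hc k (h j)) z := fun j => (ev_hasSum (h j) z).tsum_eq.symm
    simp only [e]
    exact tendsto_tsum_of_dominated_convergence hgeo (fun k => hq k z)
      (Eventually.of_forall fun j k => bound_hc_quarter (h1 j) (h3 j) k hz)
  have hqb : ∀ (z : Euc (n + 1)) k, ‖z‖ ≤ 1 / 4 → |ev (q k) z| ≤ (2 / 3) ^ k * K := by
    intro z k hz
    exact le_of_tendsto (hq k z).abs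
      (Eventually.of_forall fun j => bound_hc_quarter (h1 j) (h3 j) k hz)
  have hqs : ∀ z : Euc (n + 1), ‖z‖ ≤ 1 / 4 → Summable fun k => ev (q k) z := fun z hz =>
    Summable.of_norm_bounded hgeo (fun k => hqb z k hz)
  have hflat : ∀ z : Euc (n + 1), lastc z = 0 → ‖z‖ < 1 / 8 → ∑' k, ev (q k) z = 0 := by
    intro z hz0 hz
    refine tendsto_nhds_unique (hlim z (by linarith)) ?_
    have hb : Tendsto (fun j : ℕ => (1 : ℝ) / (j + 4) + 3 * (1 / (j + 4)) * K) U (𝓝 0) := by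
      simpa using hδt.add ((hδt.const_mul 3).mul_const K)
    refine squeeze_zero_norm (fun j => ?_) hb
    obtain ⟨y, hy, hy2⟩ := hfail j z hz0 hz
    rw [mem_ball, dist_eq_norm] at hy
    have hs := hsmall j
    have hyn : ‖y‖ ≤ 3 / 8 := by
      have := norm_sub_norm_le y z
      linarith
    have hl := bound_lip (h1 j) (h3 j) (a := z) (b := y) (by linarith) hyn
    rw [norm_sub_rev] at hl
    rw [Real.norm_eq_abs]
    have h5 : |ev (h j) z| ≤ |ev (h j) z - ev (h j) y| + |ev (h j) y| := by
      have := abs_add_le (ev (h j) z - ev (h j) y) (ev (h j) y)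
      simpa using this
    have h6 : 3 * ‖y - z‖ * K ≤ 3 * (1 / (j + 4)) * K := by gcongr
    linarith
  have hqflat : ∀ k, ∀ z : Euc (n + 1), lastc z = 0 → ev (q k) z = 0 := by
    have hs : ∀ k, ∀ z : Euc (n + 1), lastc z = 0 → ‖z‖ < 1 / 8 → ev (q k) z = 0 := by
      intro k z hz0 hz
      refine coeff_zero_of_sum (a := fun k => ev (q k) z) (fun t ht => ?_) k
      have htz : ‖t • z‖ < 1 / 8 := by
        rw [norm_smul, Real.norm_eq_abs]
        nlinarith [norm_nonneg z, abs_nonneg t]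
      have htz0 : lastc (t • z) = 0 := by
        unfold lastc at hz0 ⊢; simp [hz0]
      have hh := (hqs (t • z) (by linarith)).hasSum
      rw [hflat _ htz0 htz] at hh
      simpa only [ev_homog (hqW _).1] using hh
    intro k z hz0
    set t : ℝ := 1 / 16 / (‖z‖ + 1) with ht
    have hx : 0 < ‖z‖ + 1 := by positivity
    have ht0 : 0 < t := by positivity
    have htx : ‖t • z‖ < 1 / 8 := by
      rw [norm_smul, Real.norm_eq_abs, abs_of_pos ht0, ht, div_mul_eq_mul_div, div_lt_iff₀ hx]
      linarith [norm_nonneg z]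
    have := hs k (t • z) (by unfold lastc at hz0 ⊢; simp [hz0]) htx
    rw [ev_homog (hqW _).1] at this
    exact (mul_eq_zero.1 this).resolve_left (by positivity)
  have hq0 : ∀ k, q k = 0 := fun k => cauchy_unique k (hqW k).1 (hqW k).2.1 (hqflat k)
    (fun z hz => pderiv_even (q k) (hqW k).2.2 z hz)
  obtain ⟨z, hz, hzl⟩ := (isCompact_closedBall (0 : Euc (n + 1)) (1 / 4)).ultrafilter_le_nhds
    (U.map x) (by
      rw [Ultrafilter.coe_map, le_principal_iff, Filter.mem_map]
      exact Filter.mem_of_superset Filter.univ_mem (show univ ⊆ x ⁻¹' closedBall 0 (1 / 4) from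
        fun j _ => by simpa using hx1 j))
  have hzl' : Tendsto x U (𝓝 z) := hzl
  have hz4 : ‖z‖ ≤ 1 / 4 := by simpa using hz
  have l1 := hlim z hz4
  simp only [hq0, ev_zero, tsum_zero] at l1
  have l2 : Tendsto (fun j => |ev (h j) z| + 3 * ‖x j - z‖ * K) U (𝓝 0) := by
    have : Tendsto (fun j => ‖x j - z‖) U (𝓝 0) := tendsto_iff_norm_sub_tendsto_zero.1 hzl'
    simpa using l1.abs.add ((this.const_mul 3).mul_const K)
  have l3 : (1 / 2 : ℝ) ≤ 0 := by
    refine ge_of_tendsto l2 (Eventually.of_forall fun j => (hx2 j).trans ?_)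
    have hl := bound_lip (h1 j) (h3 j) (a := x j) (b := z) (by linarith [hx1 j]) (by linarith)
    have := abs_add_le (ev (h j) (x j) - ev (h j) z) (ev (h j) z)
    simp only [sub_add_cancel] at this
    linarith
  norm_num at l3

end Compactness

/-! ### Conclusion -/

section Final
variable {n : ℕ}

lemma lastc_zero_null : volume {y : Euc (n + 1) | lastc y = 0} = 0 := by
  set L : Submodule ℝ (Euc (n + 1)) :=
    LinearMap.ker (EuclideanSpace.proj (𝕜 := ℝ) (Fin.last n) : Euc (n + 1) →L[ℝ] ℝ).toLinearMap
  have h : {y : Euc (n + 1) | lastc y = 0} = (L : Set (Euc (n + 1))) := by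
    ext y
    simp [L, lastc]
  rw [h]
  refine Measure.addHaar_submodule _ _ fun htop => ?_
  have : (EuclideanSpace.single (Fin.last n) 1 : Euc (n + 1)) ∈ L := by rw [htop]; trivial
  simp [L] at this

lemma integral_even {F : Euc (n + 1) → ℝ} (hF : Integrable F) (he : ∀ y, F (sig n y) = F y) :
    ∫ y, F y = 2 * ∫ y in {y : Euc (n + 1) | 0 < lastc y}, F y := by
  have hP : MeasurableSet {y : Euc (n + 1) | 0 < lastc y} :=
    (isOpen_lt continuous_const lastc_continuous).measurableSet
  rw [← integral_add_compl hP hF, two_mul]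
  congr 1
  have h1 := (sig n).measurePreserving.setIntegral_preimage_emb
    (sig n).toHomeomorph.measurableEmbedding F {y : Euc (n + 1) | 0 < lastc y}ᶜ
  rw [← h1]
  simp only [he]
  refine setIntegral_congr_set ?_
  have h0 : ∀ᵐ y : Euc (n + 1), lastc y ≠ 0 := by
    rw [ae_iff]; simpa using lastc_zero_null
  filter_upwards [h0] with y hy
  refine propext ?_
  change sig n y ∈ {y : Euc (n + 1) | 0 < lastc y}ᶜ ↔ 0 < lastc y
  rw [mem_compl_iff, mem_ofPred_eq, lastc_sig]
  constructor
  · intro h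
    exact lt_of_le_of_ne (by linarith) hy.symm
  · intro h; linarith

lemma weighted_bound {g : Euc (n + 1) → ℝ} (hg : ContinuousOn g (closure (unitHalfBall n)))
    {h : MvPolynomial (Fin (n + 1)) ℝ} (hh : polyRefl n h = h)
    (hgh : ∀ y ∈ closure (unitHalfBall n), |g y - ev h y| ≤ 1) :
    ∫ y : Euc (n + 1), wt (1 / 2) y * (ev h y) ^ 2 ≤
      Hfun (unitHalfBall n) g 0 (1 / 2) + volume.real (ball (0 : Euc (n + 1)) 1) := by
  have i0 : Integrable (fun y : Euc (n + 1) => wt (1 / 2) y * (ev h y) ^ 2) :=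
    wt_mul_integrable (by norm_num) ((ev_continuous h).pow 2)
  rw [integral_even i0]
  · set S := ball (0 : Euc (n + 1)) (1 / 2) ∩ unitHalfBall n with hS
    have hSo : IsOpen S := isOpen_ball.inter isOpen_unitHalfBall
    have hSP : S ⊆ {y : Euc (n + 1) | 0 < lastc y} := fun y hy => hy.2.2
    have hcomp : IsCompact (closure (unitHalfBall n)) := by
      refine IsCompact.of_isClosed_subset (isCompact_closedBall (0 : Euc (n + 1)) 1)
        isClosed_closure fun y hy => ?_
      simpa using (closure_unitHalfBall_subset hy).1
    have ig : IntegrableOn (fun y => g y ^ 2) S :=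
      ((hg.pow 2).integrableOn_compact hcomp).mono_set (fun y hy => subset_closure hy.2)
    have hvol : volume S < ⊤ := (measure_mono (inter_subset_left)).trans_lt measure_ball_lt_top
    have i1 : IntegrableOn (fun _ : Euc (n + 1) => (1 : ℝ)) S := by
      exact integrableOn_const hvol.ne
    have e1 : ∫ y in {y : Euc (n + 1) | 0 < lastc y}, wt (1 / 2) y * (ev h y) ^ 2 =
        ∫ y in S, wt (1 / 2) y * (ev h y) ^ 2 := by
      refine setIntegral_eq_of_subset_of_forall_sdiff_eq_zero
        (isOpen_lt continuous_const lastc_continuous).measurableSet hSP fun y hy => ?_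
      have : (1 / 2 : ℝ) ≤ ‖y‖ := by
        by_contra hlt
        push Not at hlt
        exact hy.2 ⟨by simpa using hlt, by linarith, hy.1⟩
      rw [wt_eq_zero (by norm_num) this, zero_mul]
    have e2 : ∫ y in S, wt (1 / 2) y * (ev h y) ^ 2 ≤ ∫ y in S, (1 / 2) * (g y ^ 2 + 1) := by
      refine setIntegral_mono_on i0.integrableOn ((ig.add i1).const_mul _) hSo.measurableSet
        fun y hy => ?_
      have h1 := hgh y (subset_closure hy.2)
      have h2 : (g y - ev h y) ^ 2 ≤ 1 := by
        rw [← sq_abs]; nlinarith [abs_nonneg (g y - ev h y)]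
      have h3 : ev h y ^ 2 ≤ 2 * (g y ^ 2 + 1) := by
        nlinarith [sq_nonneg (2 * g y - ev h y)]
      have h4 : wt (1 / 2) y ≤ 1 / 4 := (wt_le y).trans (by norm_num)
      have := mul_le_mul h4 h3 (sq_nonneg _) (by norm_num)
      linarith
    have e3 : ∫ y in S, (1 / 2) * (g y ^ 2 + 1) =
        (1 / 2) * (Hfun (unitHalfBall n) g 0 (1 / 2) + volume.real S) := by
      rw [integral_const_mul, integral_add ig i1]
      simp [Hfun, hS]
    have e4 : volume.real S ≤ volume.real (ball (0 : Euc (n + 1)) 1) := by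
      refine measureReal_mono (fun y hy => by simpa using hy.2.1) measure_ball_lt_top.ne
    rw [e1]
    linarith
  · intro y
    rw [← ev_polyRefl, hh]
    unfold wt
    rw [LinearIsometryEquiv.norm_map]

lemma Hfun_bound {g : Euc (n + 1) → ℝ} (hg : ContinuousOn g (closure (unitHalfBall n)))
    {N : ℝ} (hb : ∀ y : Euc (n + 1), ‖y‖ < 1 / 4 → 0 < lastc y → |g y| ≤ 1)
    (hne : ∃ y : Euc (n + 1), ‖y‖ < 1 / 4 ∧ 0 < lastc y ∧ g y ≠ 0)
    (hN : Nfun (unitHalfBall n) g 0 (1 / 4) ≤ N) :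
    Hfun (unitHalfBall n) g 0 (1 / 2) ≤
      Real.exp N * volume.real (ball (0 : Euc (n + 1)) 1) := by
  set T := ball (0 : Euc (n + 1)) (1 / 4) ∩ unitHalfBall n with hT
  have hTo : IsOpen T := isOpen_ball.inter isOpen_unitHalfBall
  have hvol : volume T < ⊤ := (measure_mono (inter_subset_left)).trans_lt measure_ball_lt_top
  have hcomp : IsCompact (closure (unitHalfBall n)) := by
    refine IsCompact.of_isClosed_subset (isCompact_closedBall (0 : Euc (n + 1)) 1)
      isClosed_closure fun y hy => ?_
    simpa using (closure_unitHalfBall_subset hy).1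
  have ig : IntegrableOn (fun y => g y ^ 2) T :=
    ((hg.pow 2).integrableOn_compact hcomp).mono_set (fun y hy => subset_closure hy.2)
  have hH4 : Hfun (unitHalfBall n) g 0 (1 / 4) ≤ volume.real (ball (0 : Euc (n + 1)) 1) := by
    have h1 : ∫ y in T, g y ^ 2 ≤ ∫ y in T, (1 : ℝ) := by
      refine setIntegral_mono_on ig (integrableOn_const hvol.ne) hTo.measurableSet fun y hy => ?_
      have := hb y (by simpa using hy.1) hy.2.2
      rw [← sq_abs]; nlinarith [abs_nonneg (g y)]
    have e4 : volume.real T ≤ volume.real (ball (0 : Euc (n + 1)) 1) :=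
      measureReal_mono (fun y hy => by simpa using hy.2.1) measure_ball_lt_top.ne
    have h2 : ∫ y in T, (1 : ℝ) = volume.real T := by simp
    unfold Hfun
    linarith
  have hpos : 0 < Hfun (unitHalfBall n) g 0 (1 / 4) := by
    unfold Hfun
    rw [setIntegral_pos_iff_support_of_nonneg_ae (Eventually.of_forall fun y => sq_nonneg _) ig]
    have ho : IsOpen (T ∩ g ⁻¹' {0}ᶜ) :=
      (hg.mono fun y hy => subset_closure hy.2).isOpen_inter_preimage hTo isOpen_compl_singleton
    obtain ⟨y, y1, y2, y3⟩ := hne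
    have hnon : (T ∩ g ⁻¹' {0}ᶜ).Nonempty :=
      ⟨y, ⟨by simpa using y1, by linarith, y2⟩, y3⟩
    refine (ho.measure_pos volume hnon).trans_le (measure_mono fun z hz => ⟨?_, hz.1⟩)
    have : g z ≠ 0 := hz.2
    simpa using this
  have hnn : 0 ≤ Hfun (unitHalfBall n) g 0 (1 / 2) := integral_nonneg fun y => sq_nonneg _
  unfold Nfun at hN
  rw [show (2 : ℝ) * (1 / 4) = 1 / 2 by norm_num] at hN
  have hr : Hfun (unitHalfBall n) g 0 (1 / 2) / Hfun (unitHalfBall n) g 0 (1 / 4) ≤ Real.exp N := by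
    rcases hnn.eq_or_lt with h0 | h0
    · rw [← h0, zero_div]; positivity
    · exact (Real.log_le_iff_le_exp (div_pos h0 hpos)).1 hN
  rw [div_le_iff₀ hpos] at hr
  exact hr.trans (mul_le_mul_of_nonneg_left hH4 (Real.exp_pos N).le)

end Final

/-- Half-ball lemma: for every `N > 0` there are `ρ(N) > 0`
and `c₀(N) > 0` such that any function `g`, harmonic in the upper half-ball `B₊`
with vanishing normal derivative on the flat face, normalized by
`sup_{(1/4)B₊} |g| = 1` and with doubling index `N_g(0,1/4) ≤ N`, satisfies
`|g| ≥ c₀` on `B(x,ρ) ∩ B₊` for some `x ∈ Γ₀ ∩ (1/8)B`. -/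
theorem half_ball_lower_bound {n : ℕ} :
    ∀ N : ℝ, 0 < N → ∃ ρ₀ : ℝ, 0 < ρ₀ ∧ ∃ c₀ : ℝ, 0 < c₀ ∧
    ∀ g : Euc (n + 1) → ℝ,
      ContinuousOn g (closure (unitHalfBall n)) →
      HarmonicOn g (unitHalfBall n) →
      (∀ y ∈ flatFace n,
        DifferentiableWithinAt ℝ g (closure (unitHalfBall n)) y ∧
        fderivWithin ℝ g (closure (unitHalfBall n)) y
          (EuclideanSpace.single (Fin.last n) 1) = 0) →
      supOn (fun y => |g y|)
        {y : Euc (n + 1) | ‖y‖ < 1 / 4 ∧ 0 < lastc y} = 1 →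
      Nfun (unitHalfBall n) g 0 (1 / 4) ≤ N →
      ∃ x ∈ flatFace n ∩ ball (0 : Euc (n + 1)) (1 / 8),
        ∀ y ∈ ball x ρ₀ ∩ unitHalfBall n, c₀ ≤ |g y| := by
  intro N _
  set V := volume.real (ball (0 : Euc (n + 1)) 1) with hV
  obtain ⟨δ, hδ, hP⟩ := propP (n := n) (Real.exp N * V + V)
  refine ⟨δ, hδ, δ / 2, by positivity, ?_⟩
  intro g hg hharm hflat hsup hN
  unfold supOn at hsup
  set A := {y : Euc (n + 1) | ‖y‖ < 1 / 4 ∧ 0 < lastc y} with hA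
  have hbdd : BddAbove ((fun y => |g y|) '' A) := by
    by_contra hb
    rw [Real.sSup_of_not_bddAbove hb] at hsup
    norm_num at hsup
  have hnon : ((fun y => |g y|) '' A).Nonempty := by
    by_contra hb
    rw [Set.not_nonempty_iff_eq_empty] at hb
    rw [hb, Real.sSup_empty] at hsup
    norm_num at hsup
  have hle : ∀ y : Euc (n + 1), ‖y‖ < 1 / 4 → 0 < lastc y → |g y| ≤ 1 := by
    intro y y1 y2
    rw [← hsup]
    exact le_csSup hbdd ⟨y, ⟨y1, y2⟩, rfl⟩
  obtain ⟨_, ⟨z, ⟨hz1, hz2⟩, rfl⟩, hz3⟩ := exists_lt_of_lt_csSup hnon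
    (show (3 / 4 : ℝ) < sSup ((fun y => |g y|) '' A) by rw [hsup]; norm_num)
  simp only at hz3
  have hHb := Hfun_bound hg hle
    ⟨z, hz1, hz2, fun h0 => by rw [h0, abs_zero] at hz3; norm_num at hz3⟩ hN
  obtain ⟨h, h1, h2, h3⟩ := neumann_approx hg hharm hflat
    (ε := min (δ / 2) (1 / 4)) (lt_min (by positivity) (by norm_num))
  have hQ := weighted_bound hg h2
    (fun y hy => (h3 y hy).trans ((min_le_right _ _).trans (by norm_num)))
  obtain ⟨x, hx0, hx8, hx⟩ := hP h h1 h2 (by linarith) ⟨z, hz1.le, by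
    have := (h3 z (subset_closure_unitHalfBall (by linarith) hz2.le)).trans (min_le_right _ _)
    have h5 := abs_sub_abs_le_abs_sub (g z) (ev h z)
    linarith⟩
  refine ⟨x, ⟨⟨by linarith, hx0⟩, by simpa using hx8⟩, fun y hy => ?_⟩
  have h4 := hx y hy.1
  have h5 := (h3 y (subset_closure hy.2)).trans (min_le_left _ _)
  have h6 := abs_sub_abs_le_abs_sub (ev h y) (g y)
  rw [abs_sub_comm] at h6
  linarith

end NodalNeumann
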